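/- arXiv:1205.3878 — 2 statements merged into one kernel-verified Lean document; each statement's English description precedes it below -/
import Mathlib

section
/- Every binary completely regular code of length 15 with minimum distance 5 is completely transitive. -/
open Set

/-- Distance from a vertex to a code in the binary Hamming space. -/
noncomputable def distToCode {m : ℕ} (C : Set (Fin m → ZMod 2)) (x : Fin m → ZMod 2) : ℕ :=
  sInf {d | ∃ c ∈ C, hammingDist x c = d}

/-- `C` has minimum distance `δ`. -/
def IsMinDist {m : ℕ} (C : Set (Fin m → ZMod 2)) (δ : ℕ) : Prop :=
  (∀ x ∈ C, ∀ y ∈ C, x ≠ y → δ ≤ hammingDist x y) ∧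
  ∃ x ∈ C, ∃ y ∈ C, x ≠ y ∧ hammingDist x y = δ

/-- `C` is completely regular: the number of codewords at distance `k` from `γ`
depends only on `distToCode C γ` and `k`. -/
def IsCompletelyRegular {m : ℕ} (C : Set (Fin m → ZMod 2)) : Prop :=
  ∀ γ γ' : Fin m → ZMod 2, distToCode C γ = distToCode C γ' →
    ∀ k : ℕ, {c ∈ C | hammingDist γ c = k}.ncard = {c ∈ C | hammingDist γ' c = k}.ncard

/-- A permutation of `F_2^m` is an automorphism of the Hamming graph iff it has
the form `x ↦ (x ∘ σ⁻¹) + v` for a coordinate permutation `σ` and `v ∈ F_2^m`. -/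
def IsHammingAut {m : ℕ} (f : Equiv.Perm (Fin m → ZMod 2)) : Prop :=
  ∃ (σ : Equiv.Perm (Fin m)) (v : Fin m → ZMod 2),
    ∀ x : Fin m → ZMod 2, f x = (fun i => x (σ.symm i)) + v

/-- `C` is completely transitive: some group `X` of Hamming-graph automorphisms
preserving `C` has each cell of the distance partition as a single orbit. -/
def IsCompletelyTransitive {m : ℕ} (C : Set (Fin m → ZMod 2)) : Prop :=
  ∃ X : Subgroup (Equiv.Perm (Fin m → ZMod 2)),
    (∀ g ∈ X, IsHammingAut g ∧ ⇑g '' C = C) ∧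
    ∀ i : ℕ, ∀ x : Fin m → ZMod 2, distToCode C x = i →
      {y | distToCode C y = i} = {y | ∃ g ∈ X, g x = y}

/-- The ambient space. -/
abbrev V15 : Type := Fin 15 → ZMod 2

/-- Flip one coordinate. -/
def flip15 (x : V15) (t : Fin 15) : V15 := x + Pi.single t 1

/-- Number of codewords at distance `k`. -/
noncomputable def cnt (C : Set V15) (x : V15) (k : ℕ) : ℕ :=
  {c ∈ C | hammingDist x c = k}.ncard

open Classical in
/-- The code as a finset. -/
noncomputable def fin15 (C : Set V15) : Finset V15 := Finset.univ.filter (fun c => c ∈ C)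

theorem mem_fin15 {C : Set V15} {c : V15} : c ∈ fin15 C ↔ c ∈ C := by
  classical
  simp [fin15]

theorem cnt_eq_card (C : Set V15) (x : V15) (k : ℕ) :
    cnt C x k = ((fin15 C).filter (fun c => hammingDist x c = k)).card := by
  classical
  rw [cnt, ← Set.ncard_coe_finset]
  congr 1
  ext c
  simp [mem_fin15]

theorem cnt_eq_sum (C : Set V15) (x : V15) (k : ℕ) :
    cnt C x k = ∑ c ∈ fin15 C, if hammingDist x c = k then 1 else 0 := by
  rw [cnt_eq_card, Finset.card_filter]

theorem hd_le (x y : V15) : hammingDist x y ≤ 15 := by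
  simpa using hammingDist_le_card_fintype (x := x) (y := y)

theorem zmod2_ne {a b : ZMod 2} : a ≠ b ↔ a = b + 1 := by
  revert a b; decide

theorem flip15_dist (x c : V15) (t : Fin 15) :
    hammingDist (flip15 x t) c + (if x t = c t then 0 else 1) =
      hammingDist x c + (if x t = c t then 1 else 0) := by
  have key : ∀ u v : V15, hammingDist u v = ∑ i, if u i = v i then 0 else 1 := by
    intro u v
    rw [hammingDist, Finset.card_filter]
    exact Finset.sum_congr rfl (fun i _ => by by_cases h : u i = v i <;> simp [h])
  rw [key, key, ← Finset.add_sum_erase _ _ (Finset.mem_univ t),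
    ← Finset.add_sum_erase _ (fun i => if x i = c i then 0 else 1) (Finset.mem_univ t)]
  have h1 : ∑ i ∈ Finset.univ.erase t, (if flip15 x t i = c i then 0 else 1) =
      ∑ i ∈ Finset.univ.erase t, (if x i = c i then 0 else 1) := by
    refine Finset.sum_congr rfl (fun i hi => ?_)
    have : i ≠ t := (Finset.mem_erase.1 hi).1
    simp [flip15, this]
  rw [h1]
  by_cases h : x t = c t
  · simp [flip15, h]; ring
  · have h2 : x t = c t + 1 := zmod2_ne.1 h
    have h3 : flip15 x t t = c t := by
      simp only [flip15, Pi.add_apply, Pi.single_eq_same, h2]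
      generalize c t = a
      revert a; decide
    simp only [h3, h, if_true, if_false]; ring

theorem card_agree (x c : V15) : (Finset.univ.filter (fun t => x t = c t)).card = 15 - hammingDist x c := by
  have h := Finset.card_filter_add_card_filter_not (s := (Finset.univ : Finset (Fin 15))) (fun t => x t = c t)
  simp only [Finset.card_univ, Fintype.card_fin] at h
  rw [hammingDist]
  have : (Finset.univ.filter (fun t => ¬ x t = c t)) = (Finset.univ.filter (fun t => x t ≠ c t)) := rfl
  rw [← this]; omega

theorem flip_count (x c : V15) (k : ℕ) :
    (∑ t, if hammingDist (flip15 x t) c = k + 1 then 1 else 0) =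
      (15 - k) * (if hammingDist x c = k then 1 else 0) +
      (k + 2) * (if hammingDist x c = k + 2 then 1 else 0) := by
  have e : ∀ t, (if hammingDist (flip15 x t) c = k + 1 then 1 else 0) =
      (if x t = c t then (if hammingDist x c = k then 1 else 0) else 0) +
      (if x t ≠ c t then (if hammingDist x c = k + 2 then 1 else 0) else 0) := by
    intro t
    have := flip15_dist x c t
    by_cases h : x t = c t
    · simp only [h, if_true] at this
      have e1 : hammingDist (flip15 x t) c = k + 1 ↔ hammingDist x c = k := by omega
      simp [h, e1]
    · simp only [h, if_false] at this
      have e1 : hammingDist (flip15 x t) c = k + 1 ↔ hammingDist x c = k + 2 := by omega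
      simp [h, e1]
  rw [Finset.sum_congr rfl (fun t _ => e t), Finset.sum_add_distrib]
  have e1 : ∀ (B : ℕ) (P : Fin 15 → Prop) [DecidablePred P],
      (∑ t, if P t then B else 0) = (Finset.univ.filter P).card * B := by
    intro B P _
    rw [← Finset.sum_filter, Finset.sum_const, smul_eq_mul]
  rw [e1, e1, card_agree]
  have : (Finset.univ.filter (fun t => x t ≠ c t)).card = hammingDist x c := rfl
  rw [this]
  split_ifs <;> simp_all

theorem flip_count0 (x c : V15) :
    (∑ t, if hammingDist (flip15 x t) c = 0 then 1 else 0) =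
      (if hammingDist x c = 1 then 1 else 0) := by
  have e : ∀ t, (if hammingDist (flip15 x t) c = 0 then 1 else 0) =
      (if x t ≠ c t then (if hammingDist x c = 1 then 1 else 0) else 0) := by
    intro t
    have := flip15_dist x c t
    by_cases h : x t = c t
    · simp only [h, if_true] at this
      have e1 : ¬ hammingDist (flip15 x t) c = 0 := by omega
      rw [if_neg e1]
      simp [h]
    · simp only [h, if_false] at this
      have e1 : hammingDist (flip15 x t) c = 0 ↔ hammingDist x c = 1 := by omega
      rw [if_congr e1 rfl rfl]
      simp [h]
  rw [Finset.sum_congr rfl (fun t _ => e t), ← Finset.sum_filter, Finset.sum_const]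
  have : (Finset.univ.filter (fun t => x t ≠ c t)).card = hammingDist x c := rfl
  rw [this]
  simp only [smul_eq_mul]
  split_ifs with h
  · simp [h]
  · simp

theorem cnt_rec (C : Set V15) (x : V15) (k : ℕ) :
    ∑ t, cnt C (flip15 x t) (k + 1) = (15 - k) * cnt C x k + (k + 2) * cnt C x (k + 2) := by
  simp only [cnt_eq_sum]
  rw [Finset.sum_comm, Finset.sum_congr rfl (fun c _ => flip_count x c k), Finset.sum_add_distrib,
    ← Finset.mul_sum, ← Finset.mul_sum]

theorem cnt_rec0 (C : Set V15) (x : V15) :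
    ∑ t, cnt C (flip15 x t) 0 = cnt C x 1 := by
  simp only [cnt_eq_sum]
  rw [Finset.sum_comm, Finset.sum_congr rfl (fun c _ => flip_count0 x c)]

theorem dC_le {C : Set V15} {c : V15} (hc : c ∈ C) (x : V15) : distToCode C x ≤ hammingDist x c :=
  Nat.sInf_le ⟨c, hc, rfl⟩

theorem dC_attained {C : Set V15} (hC : C.Nonempty) (x : V15) :
    ∃ c ∈ C, hammingDist x c = distToCode C x := by
  obtain ⟨c, hc⟩ := hC
  exact Nat.sInf_mem (s := {d | ∃ c ∈ C, hammingDist x c = d}) ⟨_, c, hc, rfl⟩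

theorem cnt_lt {C : Set V15} {x : V15} {k : ℕ} (h : k < distToCode C x) : cnt C x k = 0 := by
  rw [cnt_eq_card, Finset.card_eq_zero, Finset.filter_eq_empty_iff]
  intro c hc e
  have := dC_le (mem_fin15.1 hc) x
  omega

theorem cnt_pos {C : Set V15} {x c : V15} {k : ℕ} (hc : c ∈ C) (h : hammingDist x c = k) :
    0 < cnt C x k := by
  rw [cnt_eq_card, Finset.card_pos]
  exact ⟨c, by simp [mem_fin15, hc, h]⟩

theorem dC_flip {C : Set V15} (hC : C.Nonempty) (x : V15) (t : Fin 15) :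
    distToCode C (flip15 x t) ≤ distToCode C x + 1 ∧ distToCode C x ≤ distToCode C (flip15 x t) + 1 := by
  constructor
  · obtain ⟨c, hc, h⟩ := dC_attained hC x
    have := dC_le hc (flip15 x t)
    have h2 := flip15_dist x c t
    split_ifs at h2 <;> omega
  · obtain ⟨c, hc, h⟩ := dC_attained hC (flip15 x t)
    have := dC_le hc x
    have h2 := flip15_dist x c t
    split_ifs at h2 <;> omega

/-- Neighbour counts. -/
theorem cell_counts {C : Set V15} (hC : C.Nonempty) (w : ℕ → ℕ → ℕ)
    (hw : ∀ x k, cnt C x k = w (distToCode C x) k) (x : V15) :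
    ∃ p q r : ℕ, p + q + r = 15 ∧
      (∀ k, ∑ t, cnt C (flip15 x t) k =
        p * w (distToCode C x - 1) k + q * w (distToCode C x) k + r * w (distToCode C x + 1) k) ∧
      (0 < r → ∃ y, distToCode C y = distToCode C x + 1) ∧ (distToCode C x = 0 → p = 0) := by
  set i := distToCode C x with hi
  refine ⟨(Finset.univ.filter (fun t => distToCode C (flip15 x t) + 1 = i)).card,
    (Finset.univ.filter (fun t => distToCode C (flip15 x t) = i)).card,
    (Finset.univ.filter (fun t => distToCode C (flip15 x t) = i + 1)).card, ?_, ?_, ?_, ?_⟩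
  · simp only [Finset.card_filter]
    rw [← Finset.sum_add_distrib, ← Finset.sum_add_distrib]
    rw [Finset.sum_congr rfl (g := fun _ => 1)]
    · simp
    · intro t _
      have := dC_flip hC x t
      split_ifs <;> omega
  · intro k
    simp only [Finset.card_filter, Finset.sum_mul]
    rw [← Finset.sum_add_distrib, ← Finset.sum_add_distrib]
    refine Finset.sum_congr rfl (fun t _ => ?_)
    rw [hw]
    have := dC_flip hC x t
    rw [← hi] at this
    generalize distToCode C (flip15 x t) = j at *
    rcases (by omega : j + 1 = i ∨ j = i ∨ j = i + 1) with h | h | h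
    · have h' : i = j + 1 := h.symm
      clear_value i
      subst h'; simp
      omega
    · clear_value i
      subst h; simp
    · clear_value i
      subst h
      have : ¬ i + 1 + 1 = i := by omega
      simp [this]
  · intro h
    obtain ⟨t, ht⟩ := Finset.card_pos.1 h
    exact ⟨_, (Finset.mem_filter.1 ht).2⟩
  · intro h
    rw [Finset.card_eq_zero, Finset.filter_eq_empty_iff]
    intro t _; omega

theorem uniq_close {C : Set V15} (hd : IsMinDist C 5) {x c c' : V15} (hc : c ∈ C) (hc' : c' ∈ C)
    (h : hammingDist x c + hammingDist x c' < 5) : c = c' := by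
  by_contra hne
  have h1 := hd.1 c hc c' hc' hne
  have h2 := hammingDist_triangle c x c'
  rw [hammingDist_comm c x] at h2
  omega

theorem cnt_le_one {C : Set V15} (hd : IsMinDist C 5) (x : V15) {k : ℕ} (hk : k ≤ 2) :
    cnt C x k ≤ 1 := by
  rw [cnt_eq_card, Finset.card_le_one]
  intro a ha b hb
  simp only [Finset.mem_filter, mem_fin15] at ha hb
  exact uniq_close hd (x := x) ha.1 hb.1 (by omega)

theorem cnt_eq_one {C : Set V15} (hC : C.Nonempty) (hd : IsMinDist C 5) (x : V15) {k : ℕ} (hk : k ≤ 2)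
    (hx : distToCode C x = k) : cnt C x k = 1 := by
  obtain ⟨c, hc, h⟩ := dC_attained hC x
  have h1 := cnt_pos hc (h.trans hx)
  have h2 := cnt_le_one hd x hk
  omega

theorem cnt_gap {C : Set V15} (hC : C.Nonempty) (hd : IsMinDist C 5) (x : V15) {k : ℕ}
    (h1 : distToCode C x < k) (h2 : distToCode C x + k < 5) : cnt C x k = 0 := by
  obtain ⟨c, hc, h⟩ := dC_attained hC x
  rw [cnt_eq_card, Finset.card_eq_zero, Finset.filter_eq_empty_iff]
  intro c' hc' e
  have := uniq_close hd (x := x) hc (mem_fin15.1 hc') (by omega)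
  subst this
  omega

theorem cnt3_le {C : Set V15} (hd : IsMinDist C 5) (x : V15) : cnt C x 3 ≤ 5 := by
  have h := cnt_rec C x 1
  have h2 : ∑ t, cnt C (flip15 x t) 2 ≤ ∑ t : Fin 15, 1 :=
    Finset.sum_le_sum (fun t _ => cnt_le_one hd _ le_rfl)
  simp only [Finset.sum_const, Finset.card_univ, Fintype.card_fin, smul_eq_mul, mul_one] at h2
  norm_num at h
  omega

theorem exists_w {C : Set V15} (hreg : IsCompletelyRegular C) :
    ∃ w : ℕ → ℕ → ℕ, ∀ x k, cnt C x k = w (distToCode C x) k := by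
  classical
  refine ⟨fun i k => if h : ∃ x, distToCode C x = i then cnt C h.choose k else 0, fun x k => ?_⟩
  have h : ∃ y, distToCode C y = distToCode C x := ⟨x, rfl⟩
  simp only [h, dif_pos]
  exact hreg x _ h.choose_spec.symm k

theorem dC_zero {C : Set V15} {c : V15} (hc : c ∈ C) : distToCode C c = 0 := by
  have := dC_le hc c
  simpa using this

theorem mem_of_dC_zero {C : Set V15} (hC : C.Nonempty) {c : V15} (h : distToCode C c = 0) : c ∈ C := by
  obtain ⟨d, hd, e⟩ := dC_attained hC c
  rw [h] at e
  rw [hammingDist_eq_zero] at e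
  exact e ▸ hd

/-- All parameters of a completely regular code with minimum distance 5. -/
theorem params {C : Set V15} (hC : C.Nonempty) (hreg : IsCompletelyRegular C) (hd : IsMinDist C 5)
    (w : ℕ → ℕ → ℕ) (hw : ∀ x k, cnt C x k = w (distToCode C x) k) :
    w 3 3 = 5 ∧ w 2 3 = 4 ∧ w 2 5 = 23 ∧
    w 1 4 = 14 ∧ w 1 6 = 35 ∧ w 0 5 = 42 ∧ w 0 6 = 70 ∧ w 0 7 = 15 ∧ w 0 8 = 15 ∧ w 0 9 = 70 ∧
    w 0 10 = 42 ∧ w 0 11 = 0 ∧ w 0 12 = 0 ∧ w 0 13 = 0 ∧ w 0 14 = 0 ∧ w 0 15 = 1 := by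
  have R : ∀ x, ∃ p q r : ℕ, p + q + r = 15 ∧
      (p * w (distToCode C x - 1) 0 + q * w (distToCode C x) 0 + r * w (distToCode C x + 1) 0
        = w (distToCode C x) 1) ∧
      (∀ k, p * w (distToCode C x - 1) (k+1) + q * w (distToCode C x) (k+1)
          + r * w (distToCode C x + 1) (k+1) =
        (15 - k) * w (distToCode C x) k + (k + 2) * w (distToCode C x) (k + 2)) ∧
      (0 < r → ∃ y, distToCode C y = distToCode C x + 1) ∧ (distToCode C x = 0 → p = 0) := by
    intro x
    obtain ⟨p, q, r, h1, h2, h3, h4⟩ := cell_counts hC w hw x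
    refine ⟨p, q, r, h1, ?_, ?_, h3, h4⟩
    · rw [← h2, cnt_rec0, hw]
    · intro k
      rw [← h2, cnt_rec, hw, hw]
  obtain ⟨c0, hc0⟩ := hC
  have hC : C.Nonempty := ⟨c0, hc0⟩
  have z0 := dC_zero hc0
  have hW : ∀ {x : V15} {i k : ℕ}, distToCode C x = i → w i k = cnt C x k := by
    intro x i k h
    rw [← h, hw]
  have w00 : w 0 0 = 1 := by rw [hW z0]; exact cnt_eq_one hC hd c0 (by norm_num) z0
  have w01 : w 0 1 = 0 := by rw [hW z0]; exact cnt_gap hC hd c0 (by omega) (by omega)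
  have w02 : w 0 2 = 0 := by rw [hW z0]; exact cnt_gap hC hd c0 (by omega) (by omega)
  have w03 : w 0 3 = 0 := by rw [hW z0]; exact cnt_gap hC hd c0 (by omega) (by omega)
  have w04 : w 0 4 = 0 := by rw [hW z0]; exact cnt_gap hC hd c0 (by omega) (by omega)
  have w05 : 0 < w 0 5 := by
    obtain ⟨x, hx, y, hy, -, h⟩ := hd.2
    rw [hW (dC_zero hx)]
    exact cnt_pos hy h
  obtain ⟨p0, q0, r0, s0, e00, e0, n0, m0⟩ := R c0
  simp only [z0, zero_add, Nat.zero_sub, forall_const] at e00 e0 n0 m0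
  subst m0
  have q00 : q0 = 0 := by
    have h := e00
    have h' := e0 0
    by_cases hr : 0 < r0
    · obtain ⟨y, hy⟩ := n0 hr
      have : w 1 0 = 0 := by rw [← hy, ← hw]; exact cnt_lt (by omega)
      simp only [this, w00, w01] at h; omega
    · have : r0 = 0 := by omega
      subst this
      simp only [w00, w01] at h; omega
  have r00 : r0 = 15 := by omega
  subst q00 r00
  obtain ⟨x1, z1⟩ := n0 (by norm_num)
  have w10 : w 1 0 = 0 := by rw [hW z1]; exact cnt_lt (by omega)
  have w11 : w 1 1 = 1 := by rw [hW z1]; exact cnt_eq_one hC hd x1 (by norm_num) z1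
  have w12 : w 1 2 = 0 := by rw [hW z1]; exact cnt_gap hC hd x1 (by omega) (by omega)
  have w13 : w 1 3 = 0 := by rw [hW z1]; exact cnt_gap hC hd x1 (by omega) (by omega)
  obtain ⟨p1, q1, r1, s1, e10, e1, n1, -⟩ := R x1
  simp only [z1, Nat.reduceAdd, Nat.sub_self] at e10 e1 n1
  have hr1 : 0 < r1 := by
    by_contra hr
    have hr : r1 = 0 := by omega
    subst hr
    have h' := e1 0
    simp only [w00, w10, w11, w01, w12] at e10 h'
    omega
  obtain ⟨x2, z2⟩ := n1 hr1
  have w20 : w 2 0 = 0 := by rw [hW z2]; exact cnt_lt (by omega)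
  have w21 : w 2 1 = 0 := by rw [hW z2]; exact cnt_lt (by omega)
  have w22 : w 2 2 = 1 := by rw [hW z2]; exact cnt_eq_one hC hd x2 (by norm_num) z2
  have p1' : p1 = 1 := by simp only [w00, w10, w20, w11] at e10; omega
  have q1' : q1 = 0 := by
    have h' := e1 0
    simp only [w01, w11, w21, w10, w12] at h'; omega
  have r1' : r1 = 14 := by omega
  subst p1' q1' r1'
  obtain ⟨p2, q2, r2, s2, e20, e2, n2, -⟩ := R x2
  simp only [z2, Nat.reduceAdd, Nat.reduceSub] at e20 e2 n2
  have hr2 : 0 < r2 → w 3 0 = 0 ∧ w 3 1 = 0 ∧ w 3 2 = 0 ∧ w 3 3 ≤ 5 ∧ ∃ x3, distToCode C x3 = 3 := by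
    intro h
    obtain ⟨x3, z3⟩ := n2 h
    refine ⟨?_, ?_, ?_, ?_, x3, z3⟩
    · rw [hW z3]; exact cnt_lt (by omega)
    · rw [hW z3]; exact cnt_lt (by omega)
    · rw [hW z3]; exact cnt_lt (by omega)
    · have := cnt3_le hd x3
      rwa [hw, z3] at this
  have p2' : p2 = 2 := by
    have h' := e2 0
    simp only [w11, w21, w20, w22] at h'
    by_cases h : 0 < r2
    · simp only [(hr2 h).2.1] at h'; omega
    · have : r2 = 0 := by omega
      subst this; omega
  subst p2'
  have q2' : q2 = 3 * w 2 3 := by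
    have h' := e2 1
    norm_num [w12, w22, w21] at h'
    by_cases h : 0 < r2
    · simp only [(hr2 h).2.2.1] at h'; omega
    · have : r2 = 0 := by omega
      subst this; omega
  have e12 := e1 2
  have e04 := e0 3
  norm_num [w03, w12, w03, w04] at e12 e04
  have hr2p : 0 < r2 := by omega
  obtain ⟨w30, w31, w32, w33, x3, z3⟩ := hr2 hr2p
  obtain ⟨p3, q3, r3, s3, e30, e3, n3, -⟩ := R x3
  simp only [z3, Nat.reduceAdd, Nat.reduceSub] at e30 e3 n3
  have hlam : w 2 3 = 2 ∨ w 2 3 = 4 := by omega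
  have hr3 : 0 < r3 → w 4 0 = 0 ∧ w 4 1 = 0 ∧ w 4 2 = 0 ∧ w 4 3 = 0 := by
    intro h
    obtain ⟨x4, z4⟩ := n3 h
    refine ⟨?_, ?_, ?_, ?_⟩ <;> (rw [hW z4]; exact cnt_lt (by omega))
  have p3' : p3 = 3 * w 3 3 := by
    have h' := e3 1
    norm_num [w32, w22, w31] at h'
    by_cases h : 0 < r3
    · simp only [(hr3 h).2.2.1] at h'; omega
    · have : r3 = 0 := by omega
      subst this; omega
  have e32 := e3 2
  have r3' : r3 * w 4 3 = 0 := by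
    by_cases h : 0 < r3
    · simp [(hr3 h).2.2.2]
    · have : r3 = 0 := by omega
      simp [this]
  norm_num [w32] at e32
  have e22 := e2 2
  norm_num [w22, w13] at e22
  have e13 := e1 3
  norm_num [w04, w13] at e13
  have e05 := e0 4
  have e06 := e0 5
  norm_num [w04] at e05 e06
  have e14 := e1 4
  have e23 := e2 3
  norm_num at e14 e23
  rcases hlam with hl | hl
  · exfalso
    have hq : q2 = 6 := by omega
    have hr : r2 = 7 := by omega
    subst hq hr
    rw [hl] at e22 e32 e12 e23
    have hm : w 3 3 = 3 := by omega
    have hp : p3 = 9 := by omega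
    rw [hm] at e32
    subst hp
    omega
  · have hq : q2 = 12 := by omega
    have hr : r2 = 1 := by omega
    subst hq hr
    rw [hl] at e22 e32 e12 e23
    have hm : w 3 3 = 5 := by omega
    have hp : p3 = 15 := by omega
    have hq3 : q3 = 0 := by omega
    have hr3 : r3 = 0 := by omega
    subst hp hq3 hr3
    have v0_4 : w 0 4 = 0 := by
      have h := e0 2
      simp only [Nat.reduceAdd, Nat.reduceSub, w13, w02] at h
      omega
    have v1_4 : w 1 4 = 14 := by
      have h := e1 2
      simp only [Nat.reduceAdd, Nat.reduceSub, w03, hl, w12] at h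
      omega
    have v2_4 : w 2 4 = 10 := by
      have h := e2 2
      simp only [Nat.reduceAdd, Nat.reduceSub, w13, hl, hm, w22] at h
      omega
    have v3_4 : w 3 4 = 15 := by
      have h := e3 2
      simp only [Nat.reduceAdd, Nat.reduceSub, hl, w32] at h
      omega
    have v0_5 : w 0 5 = 42 := by
      have h := e0 3
      simp only [Nat.reduceAdd, Nat.reduceSub, v1_4, w03] at h
      omega
    have v1_5 : w 1 5 = 28 := by
      have h := e1 3
      simp only [Nat.reduceAdd, Nat.reduceSub, v0_4, v2_4, w13] at h
      omega
    have v2_5 : w 2 5 = 23 := by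
      have h := e2 3
      simp only [Nat.reduceAdd, Nat.reduceSub, v1_4, v2_4, v3_4, hl] at h
      omega
    have v3_5 : w 3 5 = 18 := by
      have h := e3 3
      simp only [Nat.reduceAdd, Nat.reduceSub, v2_4, hm] at h
      omega
    have v0_6 : w 0 6 = 70 := by
      have h := e0 4
      simp only [Nat.reduceAdd, Nat.reduceSub, v1_5, v0_4] at h
      omega
    have v1_6 : w 1 6 = 35 := by
      have h := e1 4
      simp only [Nat.reduceAdd, Nat.reduceSub, v0_5, v2_5, v1_4] at h
      omega
    have v2_6 : w 2 6 = 40 := by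
      have h := e2 4
      simp only [Nat.reduceAdd, Nat.reduceSub, v1_5, v2_5, v3_5, v2_4] at h
      omega
    have v3_6 : w 3 6 = 30 := by
      have h := e3 4
      simp only [Nat.reduceAdd, Nat.reduceSub, v2_5, v3_4] at h
      omega
    have v0_7 : w 0 7 = 15 := by
      have h := e0 5
      simp only [Nat.reduceAdd, Nat.reduceSub, v1_6, v0_5] at h
      omega
    have v1_7 : w 1 7 = 50 := by
      have h := e1 5
      simp only [Nat.reduceAdd, Nat.reduceSub, v0_6, v2_6, v1_5] at h
      omega
    have v2_7 : w 2 7 = 50 := by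
      have h := e2 5
      simp only [Nat.reduceAdd, Nat.reduceSub, v1_6, v2_6, v3_6, v2_5] at h
      omega
    have v3_7 : w 3 7 = 60 := by
      have h := e3 5
      simp only [Nat.reduceAdd, Nat.reduceSub, v2_6, v3_5] at h
      omega
    have v0_8 : w 0 8 = 15 := by
      have h := e0 6
      simp only [Nat.reduceAdd, Nat.reduceSub, v1_7, v0_6] at h
      omega
    have v1_8 : w 1 8 = 50 := by
      have h := e1 6
      simp only [Nat.reduceAdd, Nat.reduceSub, v0_7, v2_7, v1_6] at h
      omega
    have v2_8 : w 2 8 = 50 := by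
      have h := e2 6
      simp only [Nat.reduceAdd, Nat.reduceSub, v1_7, v2_7, v3_7, v2_6] at h
      omega
    have v3_8 : w 3 8 = 60 := by
      have h := e3 6
      simp only [Nat.reduceAdd, Nat.reduceSub, v2_7, v3_6] at h
      omega
    have v0_9 : w 0 9 = 70 := by
      have h := e0 7
      simp only [Nat.reduceAdd, Nat.reduceSub, v1_8, v0_7] at h
      omega
    have v1_9 : w 1 9 = 35 := by
      have h := e1 7
      simp only [Nat.reduceAdd, Nat.reduceSub, v0_8, v2_8, v1_7] at h
      omega
    have v2_9 : w 2 9 = 40 := by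
      have h := e2 7
      simp only [Nat.reduceAdd, Nat.reduceSub, v1_8, v2_8, v3_8, v2_7] at h
      omega
    have v3_9 : w 3 9 = 30 := by
      have h := e3 7
      simp only [Nat.reduceAdd, Nat.reduceSub, v2_8, v3_7] at h
      omega
    have v0_10 : w 0 10 = 42 := by
      have h := e0 8
      simp only [Nat.reduceAdd, Nat.reduceSub, v1_9, v0_8] at h
      omega
    have v1_10 : w 1 10 = 28 := by
      have h := e1 8
      simp only [Nat.reduceAdd, Nat.reduceSub, v0_9, v2_9, v1_8] at h
      omega
    have v2_10 : w 2 10 = 23 := by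
      have h := e2 8
      simp only [Nat.reduceAdd, Nat.reduceSub, v1_9, v2_9, v3_9, v2_8] at h
      omega
    have v3_10 : w 3 10 = 18 := by
      have h := e3 8
      simp only [Nat.reduceAdd, Nat.reduceSub, v2_9, v3_8] at h
      omega
    have v0_11 : w 0 11 = 0 := by
      have h := e0 9
      simp only [Nat.reduceAdd, Nat.reduceSub, v1_10, v0_9] at h
      omega
    have v1_11 : w 1 11 = 14 := by
      have h := e1 9
      simp only [Nat.reduceAdd, Nat.reduceSub, v0_10, v2_10, v1_9] at h
      omega
    have v2_11 : w 2 11 = 10 := by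
      have h := e2 9
      simp only [Nat.reduceAdd, Nat.reduceSub, v1_10, v2_10, v3_10, v2_9] at h
      omega
    have v3_11 : w 3 11 = 15 := by
      have h := e3 9
      simp only [Nat.reduceAdd, Nat.reduceSub, v2_10, v3_9] at h
      omega
    have v0_12 : w 0 12 = 0 := by
      have h := e0 10
      simp only [Nat.reduceAdd, Nat.reduceSub, v1_11, v0_10] at h
      omega
    have v1_12 : w 1 12 = 0 := by
      have h := e1 10
      simp only [Nat.reduceAdd, Nat.reduceSub, v0_11, v2_11, v1_10] at h
      omega
    have v2_12 : w 2 12 = 4 := by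
      have h := e2 10
      simp only [Nat.reduceAdd, Nat.reduceSub, v1_11, v2_11, v3_11, v2_10] at h
      omega
    have v3_12 : w 3 12 = 5 := by
      have h := e3 10
      simp only [Nat.reduceAdd, Nat.reduceSub, v2_11, v3_10] at h
      omega
    have v0_13 : w 0 13 = 0 := by
      have h := e0 11
      simp only [Nat.reduceAdd, Nat.reduceSub, v1_12, v0_11] at h
      omega
    have v1_13 : w 1 13 = 0 := by
      have h := e1 11
      simp only [Nat.reduceAdd, Nat.reduceSub, v0_12, v2_12, v1_11] at h
      omega
    have v2_13 : w 2 13 = 1 := by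
      have h := e2 11
      simp only [Nat.reduceAdd, Nat.reduceSub, v1_12, v2_12, v3_12, v2_11] at h
      omega
    have v3_13 : w 3 13 = 0 := by
      have h := e3 11
      simp only [Nat.reduceAdd, Nat.reduceSub, v2_12, v3_11] at h
      omega
    have v0_14 : w 0 14 = 0 := by
      have h := e0 12
      simp only [Nat.reduceAdd, Nat.reduceSub, v1_13, v0_12] at h
      omega
    have v1_14 : w 1 14 = 1 := by
      have h := e1 12
      simp only [Nat.reduceAdd, Nat.reduceSub, v0_13, v2_13, v1_12] at h
      omega
    have v0_15 : w 0 15 = 1 := by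
      have h := e0 13
      simp only [Nat.reduceAdd, Nat.reduceSub, v1_14, v0_13] at h
      omega
    exact ⟨hm, hl, v2_5, v1_4, v1_6, v0_5, v0_6, v0_7, v0_8, v0_9, v0_10, v0_11, v0_12, v0_13, v0_14, v0_15⟩

theorem flip_cell3 {C : Set V15} (hC : C.Nonempty) (hreg : IsCompletelyRegular C) (hd : IsMinDist C 5)
    (x : V15) (hx : distToCode C x = 3) (t : Fin 15) : distToCode C (flip15 x t) ≤ 2 := by
  obtain ⟨w, hw⟩ := exists_w hreg
  have h33 : cnt C x 3 = 5 := by rw [hw, hx]; exact (params hC hreg hd w hw).1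
  have h := cnt_rec C x 1
  rw [cnt_lt (by omega), h33] at h
  by_contra hlt
  have h0 : cnt C (flip15 x t) 2 = 0 := cnt_lt (by omega)
  have h2 : ∑ t, cnt C (flip15 x t) 2 < ∑ t : Fin 15, 1 :=
    Finset.sum_lt_sum (fun t _ => cnt_le_one hd _ le_rfl) ⟨t, Finset.mem_univ _, by omega⟩
  simp only [Finset.sum_const, Finset.card_univ, Fintype.card_fin, smul_eq_mul, mul_one] at h2
  norm_num at h
  omega

theorem covering {C : Set V15} (hC : C.Nonempty) (hreg : IsCompletelyRegular C) (hd : IsMinDist C 5)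
    (x : V15) : distToCode C x ≤ 3 := by
  have key : ∀ n, ∀ x, distToCode C x = n → n ≤ 3 := by
    intro n
    induction n with
    | zero => intro x _; omega
    | succ n ih =>
      intro x hx
      obtain ⟨c, hc, h⟩ := dC_attained hC x
      have : ∃ t, x t ≠ c t := by
        by_contra hcon
        push Not at hcon
        have : x = c := funext hcon
        rw [this, hammingDist_self, ← this] at h
        omega
      obtain ⟨t, ht⟩ := this
      have h1 := flip15_dist x c t
      rw [if_neg ht, if_neg ht] at h1
      have h2 := dC_le hc (flip15 x t)
      have h3 := dC_flip hC x t
      have h4 : distToCode C (flip15 x t) = n := by omega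
      have h5 := ih _ h4
      by_contra hn
      have h6 : distToCode C (flip15 x t) = 3 := by omega
      have h7 := flip_cell3 hC hreg hd _ h6 t
      have h8 : flip15 (flip15 x t) t = x := by
        unfold flip15
        rw [add_assoc, ← Pi.single_add]
        have : (1 + 1 : ZMod 2) = 0 := by decide
        rw [this]; simp
      rw [h8] at h7
      omega
  exact key _ x rfl

theorem haut_dist {f : Equiv.Perm V15} (hf : IsHammingAut f) (x y : V15) :
    hammingDist (f x) (f y) = hammingDist x y := by
  obtain ⟨σ, v, h⟩ := hf
  rw [h, h]
  simp only [hammingDist, Pi.add_apply, ne_eq, add_left_inj]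
  refine Finset.card_bij (fun i _ => σ.symm i) ?_ ?_ ?_
  · intro i hi; simpa using hi
  · intro i _ j _ e; exact σ.symm.injective e
  · intro j hj
    exact ⟨σ j, by simpa using hj, by simp⟩

theorem haut_one : IsHammingAut (1 : Equiv.Perm V15) :=
  ⟨1, 0, fun x => by funext i; simp; rfl⟩

theorem haut_mul {f g : Equiv.Perm V15} (hf : IsHammingAut f) (hg : IsHammingAut g) :
    IsHammingAut (f * g) := by
  obtain ⟨σ, v, h⟩ := hf
  obtain ⟨τ, u, k⟩ := hg
  refine ⟨σ * τ, (fun i => u (σ.symm i)) + v, fun x => ?_⟩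
  rw [Equiv.Perm.mul_apply, h, k]
  funext i
  simp only [Pi.add_apply, add_assoc]
  rfl

theorem haut_inv {f : Equiv.Perm V15} (hf : IsHammingAut f) : IsHammingAut f⁻¹ := by
  obtain ⟨σ, v, h⟩ := hf
  refine ⟨σ⁻¹, fun i => v (σ i), fun x => ?_⟩
  rw [Equiv.Perm.inv_eq_iff_eq, h]
  funext i
  have e : (σ⁻¹).symm (σ.symm i) = i := σ.apply_symm_apply i
  have e2 : σ (σ.symm i) = i := σ.apply_symm_apply i
  simp only [Pi.add_apply, e, e2]
  generalize v i = a
  generalize x i = b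
  revert a b; decide

/-- Translation. -/
def trans15 (z : V15) : Equiv.Perm V15 := Equiv.addRight z

theorem haut_trans (z : V15) : IsHammingAut (trans15 z) :=
  ⟨1, z, fun x => by funext i; simp [trans15]; rfl⟩

/-- Coordinate permutation. -/
def perm15 (σ : Equiv.Perm (Fin 15)) : Equiv.Perm V15 where
  toFun x := fun i => x (σ.symm i)
  invFun x := fun i => x (σ i)
  left_inv x := by funext i; simp
  right_inv x := by funext i; simp

theorem haut_perm (σ : Equiv.Perm (Fin 15)) : IsHammingAut (perm15 σ) :=
  ⟨σ, 0, fun x => by simp [perm15]⟩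

theorem dC_image {f : Equiv.Perm V15} (hf : IsHammingAut f) (C : Set V15) (x : V15) :
    distToCode (f '' C) (f x) = distToCode C x := by
  unfold distToCode
  congr 1
  ext d
  simp only [Set.mem_ofPred_eq, Set.exists_mem_image, haut_dist hf]

theorem cr_image {f : Equiv.Perm V15} (hf : IsHammingAut f) {C : Set V15}
    (h : IsCompletelyRegular C) : IsCompletelyRegular (f '' C) := by
  have key : ∀ y k, {c ∈ f '' C | hammingDist y c = k}.ncard =
      {c ∈ C | hammingDist (f.symm y) c = k}.ncard := by
    intro y k
    rw [← Set.ncard_image_of_injective {c ∈ C | hammingDist (f.symm y) c = k} f.injective]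
    congr 1
    ext c
    constructor
    · rintro ⟨⟨d, hd, rfl⟩, e⟩
      refine ⟨d, ⟨hd, ?_⟩, rfl⟩
      rw [← haut_dist hf, f.apply_symm_apply]; exact e
    · rintro ⟨d, ⟨hd, e⟩, rfl⟩
      refine ⟨⟨d, hd, rfl⟩, ?_⟩
      rw [← haut_dist hf, f.apply_symm_apply] at e; exact e
  intro y y' e k
  rw [key, key]
  refine h _ _ ?_ k
  rw [← dC_image hf C, ← dC_image hf C (f.symm y')]
  simpa using e

theorem md_image {f : Equiv.Perm V15} (hf : IsHammingAut f) {C : Set V15} {δ : ℕ}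
    (h : IsMinDist C δ) : IsMinDist (f '' C) δ := by
  refine ⟨?_, ?_⟩
  · rintro _ ⟨x, hx, rfl⟩ _ ⟨y, hy, rfl⟩ hne
    rw [haut_dist hf]
    exact h.1 x hx y hy (fun e => hne (by rw [e]))
  · obtain ⟨x, hx, y, hy, hne, e⟩ := h.2
    exact ⟨f x, ⟨x, hx, rfl⟩, f y, ⟨y, hy, rfl⟩, fun e => hne (f.injective e), by rw [haut_dist hf, e]⟩

theorem ct_of_image {f : Equiv.Perm V15} (hf : IsHammingAut f) {C : Set V15}
    (h : IsCompletelyTransitive (f '' C)) : IsCompletelyTransitive C := by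
  obtain ⟨X, h1, h2⟩ := h
  refine ⟨X.map (MulAut.conj f⁻¹).toMonoidHom, ?_, ?_⟩
  · rintro _ ⟨g, hg, rfl⟩
    obtain ⟨a, b⟩ := h1 g hg
    have e : (MulAut.conj f⁻¹).toMonoidHom g = f⁻¹ * g * f := by simp
    rw [e]
    refine ⟨haut_mul (haut_mul (haut_inv hf) a) hf, ?_⟩
    rw [Equiv.Perm.coe_mul, Equiv.Perm.coe_mul, Set.image_comp, Set.image_comp, b, ← Set.image_comp,
      ← Equiv.Perm.coe_mul]
    simp
  · intro i x hx
    have h3 := h2 i (f x) (by rw [dC_image hf, hx])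
    ext y
    have h4 : f y ∈ {y | distToCode (f '' C) y = i} ↔ f y ∈ {y | ∃ g ∈ X, g (f x) = y} := by rw [h3]
    simp only [Set.mem_ofPred_eq, dC_image hf] at h4 ⊢
    rw [h4]
    constructor
    · rintro ⟨g, hg, e⟩
      exact ⟨_, ⟨g, hg, rfl⟩, by simp [e]⟩
    · rintro ⟨_, ⟨g, hg, rfl⟩, e⟩
      refine ⟨g, hg, ?_⟩
      simp at e
      rw [← e]; simp

/-- The working hypotheses. -/
structure Good (C : Set V15) : Prop where
  zero : (0 : V15) ∈ C
  reg : IsCompletelyRegular C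
  md : IsMinDist C 5

theorem Good.ne {C : Set V15} (h : Good C) : C.Nonempty := ⟨0, h.zero⟩

theorem add_self15 (x : V15) : x + x = 0 := by
  funext i
  simp only [Pi.add_apply, Pi.zero_apply]
  generalize x i = a
  revert a; decide

theorem Good.trans {C : Set V15} (h : Good C) {z : V15} (hz : z ∈ C) : Good (trans15 z '' C) := by
  refine ⟨⟨z, hz, ?_⟩, cr_image (haut_trans z) h.reg, md_image (haut_trans z) h.md⟩
  exact add_self15 z

theorem Good.perm {C : Set V15} (h : Good C) (σ : Equiv.Perm (Fin 15)) : Good (perm15 σ '' C) :=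
  ⟨⟨0, h.zero, rfl⟩, cr_image (haut_perm σ) h.reg, md_image (haut_perm σ) h.md⟩

theorem mem_trans {C : Set V15} {z x : V15} : x ∈ trans15 z '' C ↔ x + z ∈ C := by
  constructor
  · rintro ⟨y, hy, rfl⟩
    simp only [trans15, Equiv.coe_addRight, add_assoc, add_self15, add_zero]
    exact hy
  · intro h
    exact ⟨_, h, by simp [trans15, add_assoc, add_self15]⟩

/-- Weight table. -/
theorem Good.cnts {C : Set V15} (h : Good C) : 
    (∀ x, distToCode C x = 2 → cnt C x 3 = 4 ∧ cnt C x 5 = 23) ∧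
    (∀ x, distToCode C x = 1 → cnt C x 4 = 14 ∧ cnt C x 6 = 35) ∧
    (∀ x ∈ C, cnt C x 0 = 1 ∧ cnt C x 1 = 0 ∧ cnt C x 2 = 0 ∧ cnt C x 3 = 0 ∧ cnt C x 4 = 0 ∧
      cnt C x 5 = 42 ∧ cnt C x 6 = 70 ∧ cnt C x 7 = 15 ∧ cnt C x 8 = 15 ∧ cnt C x 9 = 70 ∧
      cnt C x 10 = 42 ∧ cnt C x 11 = 0 ∧ cnt C x 12 = 0 ∧ cnt C x 13 = 0 ∧ cnt C x 14 = 0 ∧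
      cnt C x 15 = 1) := by
  obtain ⟨w, hw⟩ := exists_w h.reg
  have H := params h.ne h.reg h.md w hw
  refine ⟨?_, ?_, ?_⟩
  · intro x hx
    simp only [hw, hx]
    tauto
  · intro x hx
    simp only [hw, hx]
    tauto
  · intro x hx
    have z := dC_zero hx
    refine ⟨cnt_eq_one h.ne h.md _ (by omega) z, cnt_gap h.ne h.md _ (by omega) (by omega),
      cnt_gap h.ne h.md _ (by omega) (by omega), cnt_gap h.ne h.md _ (by omega) (by omega),
      cnt_gap h.ne h.md _ (by omega) (by omega), ?_⟩
    simp only [hw, z]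
    tauto

theorem Good.dist {C : Set V15} (h : Good C) {x y : V15} (hx : x ∈ C) (hy : y ∈ C) :
    hammingDist x y = 0 ∨ hammingDist x y = 5 ∨ hammingDist x y = 6 ∨ hammingDist x y = 7 ∨
    hammingDist x y = 8 ∨ hammingDist x y = 9 ∨ hammingDist x y = 10 ∨ hammingDist x y = 15 := by
  have H := h.cnts.2.2 x hx
  have hp := cnt_pos hy (rfl : hammingDist x y = _)
  have hl := hd_le x y
  generalize hammingDist x y = k at *
  interval_cases k <;> omega

theorem Good.card {C : Set V15} (h : Good C) : (fin15 C).card = 256 := by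
  have H := h.cnts.2.2 0 h.zero
  have e : (fin15 C).card = ∑ k ∈ Finset.range 16, cnt C 0 k := by
    rw [Finset.card_eq_sum_card_fiberwise (f := fun c => hammingDist 0 c) (t := Finset.range 16)]
    · exact Finset.sum_congr rfl (fun k _ => (cnt_eq_card C 0 k).symm)
    · intro c _
      have := hd_le 0 c
      exact Finset.mem_coe.2 (Finset.mem_range.2 (Nat.lt_succ_of_le this))
  rw [e]
  simp only [Finset.sum_range_succ, Finset.sum_range_zero]
  omega

/-- The all-one vector. -/
def one15 : V15 := fun _ => 1

theorem hd_one (x y : V15) : hammingDist x (y + one15) = 15 - hammingDist x y := by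
  rw [← card_agree, hammingDist]
  have key : ∀ a b : ZMod 2, a ≠ b + 1 ↔ a = b := by decide
  exact congrArg Finset.card (Finset.filter_congr (fun i _ => key (x i) (y i)))

theorem Good.compl {C : Set V15} (h : Good C) {x : V15} (hx : x ∈ C) : x + one15 ∈ C := by
  have H := h.cnts.2.2 x hx
  have : 0 < cnt C x 15 := by omega
  rw [cnt_eq_card, Finset.card_pos] at this
  obtain ⟨c, hc⟩ := this
  simp only [Finset.mem_filter, mem_fin15] at hc
  have h0 : hammingDist c (x + one15) = 0 := by
    rw [hd_one, hammingDist_comm, hc.2]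
  rw [hammingDist_eq_zero] at h0
  rw [← h0]; exact hc.1

/-- Coordinate indicator. -/
def ind (c : V15) (a : Fin 15) : ℕ := if c a = 0 then 0 else 1

theorem ind_le (c : V15) (a : Fin 15) : ind c a ≤ 1 := by unfold ind; split_ifs <;> omega

theorem d_flip1 (c : V15) (a : Fin 15) :
    hammingDist (flip15 0 a) c + 2 * ind c a = hammingDist 0 c + 1 := by
  have h := flip15_dist 0 c a
  unfold ind
  by_cases e : c a = 0
  · simp only [Pi.zero_apply, e, if_true] at h ⊢; omega
  · have e' : ¬ (0 = c a) := fun q => e q.symm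
    simp only [Pi.zero_apply, e, e', if_false] at h ⊢; omega

theorem d_flip2 (c : V15) {a b : Fin 15} (hab : a ≠ b) :
    hammingDist (flip15 (flip15 0 a) b) c + 2 * ind c a + 2 * ind c b = hammingDist 0 c + 2 := by
  have h1 := d_flip1 c a
  have h := flip15_dist (flip15 0 a) c b
  have hz : flip15 0 a b = 0 := by simp [flip15, hab.symm]
  rw [hz] at h
  have : hammingDist (flip15 (flip15 0 a) b) c + 2 * ind c b = hammingDist (flip15 0 a) c + 1 := by
    unfold ind
    by_cases e : c b = 0
    · simp only [e, if_true] at h ⊢; omega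
    · have e' : ¬ (0 = c b) := fun q => e q.symm
      simp only [e, e', if_false] at h ⊢; omega
  omega

/-- Codewords of weight `k`. -/
noncomputable def Ak (C : Set V15) (k : ℕ) : Finset V15 :=
  (fin15 C).filter (fun c => hammingDist 0 c = k)

theorem card_Ak (C : Set V15) (k : ℕ) : (Ak C k).card = cnt C 0 k := (cnt_eq_card C 0 k).symm

theorem sum_Ak (C : Set V15) (k : ℕ) (g : V15 → ℕ) :
    ∑ c ∈ Ak C k, g c = ∑ c ∈ fin15 C, if hammingDist 0 c = k then g c else 0 := by
  rw [Ak, Finset.sum_filter]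

theorem Good.flip1 {C : Set V15} (h : Good C) (a : Fin 15) : distToCode C (flip15 0 a) = 1 := by
  have h0 := d_flip1 0 a
  simp only [ind, Pi.zero_apply, if_true, hammingDist_self] at h0
  obtain ⟨c, hc, e⟩ := dC_attained h.ne (flip15 0 a)
  have h1 := dC_le h.zero (flip15 0 a)
  have := uniq_close h.md (x := flip15 0 a) hc h.zero (by omega)
  subst this
  omega

theorem Good.flip2 {C : Set V15} (h : Good C) {a b : Fin 15} (hab : a ≠ b) :
    distToCode C (flip15 (flip15 0 a) b) = 2 := by
  have h0 := d_flip2 0 hab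
  simp only [ind, Pi.zero_apply, if_true, hammingDist_self] at h0
  obtain ⟨c, hc, e⟩ := dC_attained h.ne (flip15 (flip15 0 a) b)
  have h1 := dC_le h.zero (flip15 (flip15 0 a) b)
  have := uniq_close h.md (x := flip15 (flip15 0 a) b) hc h.zero (by omega)
  subst this
  omega

theorem Good.n5 {C : Set V15} (h : Good C) (a : Fin 15) : ∑ c ∈ Ak C 5, ind c a = 14 := by
  rw [← (h.cnts.2.1 _ (h.flip1 a)).1, cnt_eq_sum, sum_Ak]
  refine Finset.sum_congr rfl (fun c hc => ?_)
  have h1 := h.dist h.zero (mem_fin15.1 hc)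
  have h2 := d_flip1 c a
  have h3 := ind_le c a
  split_ifs <;> omega

theorem Good.n7 {C : Set V15} (h : Good C) (a : Fin 15) : ∑ c ∈ Ak C 7, ind c a = 7 := by
  have e : cnt C (flip15 0 a) 6 + ∑ c ∈ Ak C 5, ind c a = ∑ c ∈ Ak C 7, ind c a + ∑ c ∈ Ak C 5, 1 := by
    rw [cnt_eq_sum, sum_Ak, sum_Ak, sum_Ak, ← Finset.sum_add_distrib, ← Finset.sum_add_distrib]
    refine Finset.sum_congr rfl (fun c hc => ?_)
    have h1 := h.dist h.zero (mem_fin15.1 hc)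
    have h2 := d_flip1 c a
    have h3 := ind_le c a
    split_ifs <;> omega
  rw [(h.cnts.2.1 _ (h.flip1 a)).2, h.n5, Finset.sum_const, card_Ak,
    (h.cnts.2.2 0 h.zero).2.2.2.2.2.1] at e
  simp at e
  omega

theorem Good.n55 {C : Set V15} (h : Good C) {a b : Fin 15} (hab : a ≠ b) :
    ∑ c ∈ Ak C 5, ind c a * ind c b = 4 := by
  rw [← (h.cnts.1 _ (h.flip2 hab)).1, cnt_eq_sum, sum_Ak]
  refine Finset.sum_congr rfl (fun c hc => ?_)
  have h1 := h.dist h.zero (mem_fin15.1 hc)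
  have h2 := d_flip2 c hab
  rcases Nat.le_one_iff_eq_zero_or_eq_one.1 (ind_le c a) with ha | ha <;>
  rcases Nat.le_one_iff_eq_zero_or_eq_one.1 (ind_le c b) with hb | hb <;>
  simp only [ha, hb] at h2 ⊢ <;> split_ifs <;> omega

theorem Good.n77 {C : Set V15} (h : Good C) {a b : Fin 15} (hab : a ≠ b) :
    ∑ c ∈ Ak C 7, ind c a * ind c b = 3 := by
  have e : cnt C (flip15 (flip15 0 a) b) 5 + 2 * ∑ c ∈ Ak C 5, ind c a * ind c b =
      ∑ c ∈ Ak C 7, ind c a * ind c b + ∑ c ∈ Ak C 5, ind c a + ∑ c ∈ Ak C 5, ind c b := by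
    rw [cnt_eq_sum, sum_Ak, sum_Ak, sum_Ak, sum_Ak, Finset.mul_sum, ← Finset.sum_add_distrib,
      ← Finset.sum_add_distrib, ← Finset.sum_add_distrib]
    refine Finset.sum_congr rfl (fun c hc => ?_)
    have h1 := h.dist h.zero (mem_fin15.1 hc)
    have h2 := d_flip2 c hab
    rcases Nat.le_one_iff_eq_zero_or_eq_one.1 (ind_le c a) with ha | ha <;>
    rcases Nat.le_one_iff_eq_zero_or_eq_one.1 (ind_le c b) with hb | hb <;>
    simp only [ha, hb] at h2 ⊢ <;> split_ifs <;> omega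
  rw [(h.cnts.1 _ (h.flip2 hab)).2, h.n5, h.n5, h.n55 hab] at e
  omega

theorem hd_ind (x y : V15) :
    hammingDist x y + 2 * ∑ a, ind x a * ind y a = hammingDist 0 x + hammingDist 0 y := by
  have key : ∀ u v : V15, hammingDist u v = ∑ i, if u i = v i then 0 else 1 := by
    intro u v
    rw [hammingDist, Finset.card_filter]
    exact Finset.sum_congr rfl (fun i _ => by by_cases h : u i = v i <;> simp [h])
  rw [key, key, key, Finset.mul_sum, ← Finset.sum_add_distrib, ← Finset.sum_add_distrib]
  refine Finset.sum_congr rfl (fun i _ => ?_)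
  have key2 : ∀ a b : ZMod 2, (if a = b then 0 else 1) +
      2 * ((if a = 0 then 0 else 1) * (if b = 0 then 0 else 1)) =
      (if 0 = a then 0 else 1) + (if 0 = b then 0 else 1) := by decide
  exact key2 _ _

theorem wt_ind (x : V15) : ∑ a, ind x a = hammingDist 0 x := by
  have h := hd_ind x x
  have e : ∀ a, ind x a * ind x a = ind x a := by
    intro a
    rcases Nat.le_one_iff_eq_zero_or_eq_one.1 (ind_le x a) with ha | ha <;> simp [ha]
  simp only [e, hammingDist_self] at h
  omega

theorem Good.meet7 {C : Set V15} (h : Good C) {x y : V15} (hx : x ∈ Ak C 7) (hy : y ∈ Ak C 7)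
    (hxy : x ≠ y) : ∑ a, ind x a * ind y a = 3 := by
  have sq : ∀ (c : V15) a, ind c a * ind c a = ind c a := by
    intro c a
    rcases Nat.le_one_iff_eq_zero_or_eq_one.1 (ind_le c a) with ha | ha <;> simp [ha]
  have wx : ∑ a, ind x a = 7 := by rw [wt_ind]; exact (Finset.mem_filter.1 hx).2
  have s1 : ∑ c ∈ Ak C 7, ∑ a, ind x a * ind c a = 49 := by
    rw [Finset.sum_comm]
    simp only [← Finset.mul_sum, h.n7, ← Finset.sum_mul, wx]
    norm_num
  have n2 : ∀ a b, ∑ c ∈ Ak C 7, ind c a * ind c b = 3 + if a = b then 4 else 0 := by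
    intro a b
    by_cases hab : a = b
    · subst hab; simp [sq, h.n7]
    · simp [h.n77 hab, hab]
  have s2 : ∑ c ∈ Ak C 7, (∑ a, ind x a * ind c a) * (∑ a, ind x a * ind c a) = 175 := by
    have e : ∀ c, (∑ a, ind x a * ind c a) * (∑ a, ind x a * ind c a) =
        ∑ a, ∑ b, ind x a * ind x b * (ind c a * ind c b) := by
      intro c
      rw [Finset.sum_mul_sum]
      refine Finset.sum_congr rfl (fun a _ => Finset.sum_congr rfl (fun b _ => by ring))
    simp only [e]
    rw [Finset.sum_comm]
    have e2 : ∀ a, ∑ c ∈ Ak C 7, ∑ b, ind x a * ind x b * (ind c a * ind c b) = 25 * ind x a := by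
      intro a
      rw [Finset.sum_comm]
      simp only [← Finset.mul_sum, n2]
      simp only [mul_add, Finset.sum_add_distrib, mul_ite, mul_zero, Finset.sum_ite_eq,
        Finset.mem_univ, if_true, ← Finset.sum_mul, ← Finset.mul_sum, wx, sq]
      ring
    simp only [e2, ← Finset.mul_sum, wx]
    norm_num
  have card : (Ak C 7).card = 15 := by rw [card_Ak]; exact (h.cnts.2.2 0 h.zero).2.2.2.2.2.2.2.1
  have s3 : ∑ c ∈ Ak C 7, (((∑ a, ind x a * ind c a : ℕ) : ℤ) - 3) ^ 2 = 16 := by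
    have e : ∀ c, (((∑ a, ind x a * ind c a : ℕ) : ℤ) - 3) ^ 2 =
        (((∑ a, ind x a * ind c a) * (∑ a, ind x a * ind c a) : ℕ) : ℤ)
          - 6 * ((∑ a, ind x a * ind c a : ℕ) : ℤ) + 9 := by
      intro c
      rw [Nat.cast_mul]
      ring
    rw [Finset.sum_congr rfl (fun c _ => e c), Finset.sum_add_distrib, Finset.sum_sub_distrib,
      ← Finset.mul_sum, ← Nat.cast_sum, ← Nat.cast_sum, s1, s2, Finset.sum_const, card]
    norm_num
  rw [← Finset.add_sum_erase _ _ hx] at s3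
  have hxx : ∑ a, ind x a * ind x a = 7 := by simp only [sq, wx]
  rw [hxx] at s3
  have hy' : y ∈ (Ak C 7).erase x := Finset.mem_erase.2 ⟨hxy.symm, hy⟩
  have le := Finset.single_le_sum (f := fun c => (((∑ a, ind x a * ind c a : ℕ) : ℤ) - 3) ^ 2)
    (fun i _ => sq_nonneg _) hy'
  have : (((∑ a, ind x a * ind y a : ℕ) : ℤ) - 3) ^ 2 = 0 := by
    have := sq_nonneg (((∑ a, ind x a * ind y a : ℕ) : ℤ) - 3)
    omega
  have := pow_eq_zero_iff (two_ne_zero) |>.1 this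
  omega

/-- Distances inside a class. -/
def oct (n : ℕ) : Prop := n = 0 ∨ n = 7 ∨ n = 8 ∨ n = 15

theorem oct_compl {n : ℕ} (h : n ≤ 15) : oct (15 - n) ↔ oct n := by unfold oct; omega

theorem Good.oct0 {C : Set V15} (h : Good C) {x y : V15} (hx : x ∈ C) (hy : y ∈ C)
    (ox : oct (hammingDist 0 x)) (oy : oct (hammingDist 0 y)) : oct (hammingDist x y) := by
  -- reduce to weight 0 or 7
  have key : ∀ x ∈ C, ∀ y ∈ C, (hammingDist 0 x = 0 ∨ hammingDist 0 x = 7) →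
      (hammingDist 0 y = 0 ∨ hammingDist 0 y = 7) → oct (hammingDist x y) := by
    intro x hx y hy ox oy
    rcases ox with ox | ox
    · have : 0 = x := hammingDist_eq_zero.1 ox
      rw [← this]; unfold oct; omega
    rcases oy with oy | oy
    · have : 0 = y := hammingDist_eq_zero.1 oy
      rw [← this, hammingDist_comm]; unfold oct; omega
    by_cases hxy : x = y
    · subst hxy; simp [oct]
    have m := h.meet7 (x := x) (y := y) (Finset.mem_filter.2 ⟨mem_fin15.2 hx, ox⟩)
      (Finset.mem_filter.2 ⟨mem_fin15.2 hy, oy⟩) hxy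
    have e := hd_ind x y
    unfold oct; omega
  have key2 : ∀ x ∈ C, oct (hammingDist 0 x) → ∃ x' ∈ C, (x' = x ∨ x' = x + one15) ∧
      (hammingDist 0 x' = 0 ∨ hammingDist 0 x' = 7) := by
    intro x hx ox
    by_cases hs : hammingDist 0 x = 0 ∨ hammingDist 0 x = 7
    · exact ⟨x, hx, Or.inl rfl, hs⟩
    · refine ⟨_, h.compl hx, Or.inr rfl, ?_⟩
      rw [hd_one]; unfold oct at ox; omega
  obtain ⟨x', hx', ex, wx⟩ := key2 x hx ox
  obtain ⟨y', hy', ey, wy⟩ := key2 y hy oy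
  have := key x' hx' y' hy' wx wy
  have e2 : oct (hammingDist x' y) := by
    rcases ey with rfl | rfl
    · exact this
    · rw [hd_one, oct_compl (hd_le _ _)] at this; exact this
  rcases ex with rfl | rfl
  · exact e2
  · rw [hammingDist_comm, hd_one, oct_compl (hd_le _ _), hammingDist_comm] at e2; exact e2

theorem hd_trans (z x y : V15) : hammingDist (x + z) (y + z) = hammingDist x y :=
  haut_dist (haut_trans z) x y

theorem Good.oct_trans {C : Set V15} (h : Good C) {x y z : V15} (hx : x ∈ C) (hy : y ∈ C) (hz : z ∈ C)
    (ox : oct (hammingDist z x)) (oy : oct (hammingDist z y)) : oct (hammingDist x y) := by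
  have e := (h.trans hz).oct0 (x := x + z) (y := y + z) ⟨x, hx, rfl⟩ ⟨y, hy, rfl⟩
  rw [hd_trans, ← add_self15 z, hd_trans, hd_trans] at e
  exact e ox oy

instance : DecidablePred oct := fun n => by unfold oct; infer_instance

/-- The form coming from the standard dot product of the extended words. -/
def Bf : LinearMap.BilinForm (ZMod 2) V15 :=
  LinearMap.mk₂ (ZMod 2) (fun x y => ∑ i, x i * y i + (∑ i, x i) * (∑ i, y i))
    (by intro x y z; simp only [Pi.add_apply, add_mul, Finset.sum_add_distrib]; ring)
    (by intro c x y; simp only [Pi.smul_apply, smul_eq_mul, mul_assoc, ← Finset.mul_sum]; ring)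
    (by intro x y z; simp only [Pi.add_apply, mul_add, Finset.sum_add_distrib]; ring)
    (by
      intro c x y
      simp only [Pi.smul_apply, smul_eq_mul, ← Finset.mul_sum, mul_left_comm _ c]; ring)

theorem Bf_apply (x y : V15) : Bf x y = ∑ i, x i * y i + (∑ i, x i) * (∑ i, y i) := rfl

theorem Bf_comm (x y : V15) : Bf x y = Bf y x := by
  rw [Bf_apply, Bf_apply, mul_comm (∑ i, x i)]
  simp only [mul_comm]

theorem ind_cast (x : V15) (a : Fin 15) : ((ind x a : ℕ) : ZMod 2) = x a := by
  have key : ∀ u : ZMod 2, (((if u = 0 then 0 else 1) : ℕ) : ZMod 2) = u := by decide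
  exact key _

theorem Bf_nat (x y : V15) :
    Bf x y = ((∑ a, ind x a * ind y a + hammingDist 0 x * hammingDist 0 y : ℕ) : ZMod 2) := by
  rw [Bf_apply, ← wt_ind, ← wt_ind]
  push_cast
  simp only [ind_cast]

theorem oct_table : ∀ a ∈ [0,5,6,7,8,9,10,15], ∀ b ∈ [0,5,6,7,8,9,10,15],
    ∀ d ∈ [0,5,6,7,8,9,10,15], ∀ m < 16, d + 2 * m = a + b →
    (oct a → oct b → oct d) → (oct a → oct d → oct b) → (oct b → oct d → oct a) → (m + a * b) % 2 = if oct a ∨ oct b ∨ oct d then 0 else 1 := by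
  decide +kernel

theorem Good.Bf_eq {C : Set V15} (h : Good C) {x y : V15} (hx : x ∈ C) (hy : y ∈ C) :
    Bf x y = if oct (hammingDist 0 x) ∨ oct (hammingDist 0 y) ∨ oct (hammingDist x y)
      then 0 else 1 := by
  have e := oct_table _ (by have := h.dist h.zero hx; simpa using this)
    _ (by have := h.dist h.zero hy; simpa using this)
    _ (by have := h.dist hx hy; simpa using this) (∑ a, ind x a * ind y a)
    (by have := hd_ind x y; have := hd_le 0 x; have := hd_le 0 y; omega) (hd_ind x y)
    (fun o1 o2 => h.oct_trans hx hy h.zero o1 o2)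
    (fun o1 o2 => h.oct_trans h.zero hy hx (by rwa [hammingDist_comm]) o2)
    (fun o1 o2 => h.oct_trans h.zero hx hy (by rwa [hammingDist_comm]) (by rwa [hammingDist_comm]))
  rw [Bf_nat, ← ZMod.natCast_mod, e]
  split_ifs <;> simp

theorem Bf_rad : Bf.orthogonal ⊤ ≤ Submodule.span (ZMod 2) {one15} := by
  intro x hx
  rw [LinearMap.BilinForm.mem_orthogonal_iff] at hx
  rw [Submodule.mem_span_singleton]
  refine ⟨∑ i, x i, ?_⟩
  funext i
  have := hx (Pi.single i 1) trivial
  rw [Bf_apply] at this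
  simp only [Pi.single_apply, ite_mul, one_mul, zero_mul, Finset.sum_ite_eq',
    Finset.mem_univ, if_true] at this
  have key : ∀ a b : ZMod 2, a + b = 0 → b * 1 = a := by decide
  exact key _ _ this

theorem Bf_dim (W : Submodule (ZMod 2) V15) :
    Module.finrank (ZMod 2) W + Module.finrank (ZMod 2) (Bf.orthogonal W) ≤ 16 := by
  have hr : Bf.IsRefl := by
    intro x y e
    rw [Bf_comm]; exact e
  rw [LinearMap.BilinForm.finrank_add_finrank_orthogonal hr]
  have h1 : Module.finrank (ZMod 2) ↥(W ⊓ Bf.orthogonal ⊤) ≤ 1 := by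
    refine (Submodule.finrank_mono (inf_le_right.trans Bf_rad)).trans ?_
    rw [finrank_span_singleton]
    intro e
    have := congrFun e 0
    simp [one15] at this
  have h2 : Module.finrank (ZMod 2) V15 = 15 := by simp
  omega

/-- Class of a codeword. -/
noncomputable def cls (C : Set V15) (x : V15) : Finset V15 :=
  (fin15 C).filter (fun c => oct (hammingDist x c))

theorem mem_cls {C : Set V15} {x y : V15} : y ∈ cls C x ↔ y ∈ C ∧ oct (hammingDist x y) := by
  rw [cls, Finset.mem_filter, mem_fin15]

theorem Good.card_cls {C : Set V15} (h : Good C) {x : V15} (hx : x ∈ C) : (cls C x).card = 32 := by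
  have H := h.cnts.2.2 x hx
  have : (cls C x).card = cnt C x 0 + cnt C x 7 + cnt C x 8 + cnt C x 15 := by
    rw [cnt_eq_sum, cnt_eq_sum, cnt_eq_sum, cnt_eq_sum, cls, Finset.card_filter,
      ← Finset.sum_add_distrib, ← Finset.sum_add_distrib, ← Finset.sum_add_distrib]
    refine Finset.sum_congr rfl (fun c _ => ?_)
    have key : ∀ n : ℕ, (if oct n then 1 else 0) = (if n = 0 then 1 else 0) +
        (if n = 7 then 1 else 0) + (if n = 8 then 1 else 0) + (if n = 15 then 1 else 0) := by
      intro n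
      by_cases o : oct n
      · have o' := o
        rcases o' with rfl | rfl | rfl | rfl <;> simp [o]
      · have o' := o
        unfold oct at o'
        push Not at o'
        simp [o, o']
    exact key _
  omega

theorem Good.new {C : Set V15} (h : Good C) (S : List V15) (hS : ∀ s ∈ S, s ∈ C)
    (hl : S.length ≤ 7) : ∃ y ∈ C, ∀ s ∈ S, ¬ oct (hammingDist s y) := by
  by_contra! hc
  have sub : fin15 C ⊆ S.toFinset.biUnion (cls C) := by
    intro y hy
    obtain ⟨s, hs, o⟩ := hc y (mem_fin15.1 hy)
    exact Finset.mem_biUnion.2 ⟨s, List.mem_toFinset.2 hs, mem_cls.2 ⟨mem_fin15.1 hy, o⟩⟩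
  have h1 := Finset.card_le_card sub
  have h2 : (S.toFinset.biUnion (cls C)).card ≤ S.toFinset.card * 32 :=
    Finset.card_biUnion_le_card_mul _ _ _
      (fun s hs => (h.card_cls (hS s (List.mem_toFinset.1 hs))).le)
  have h3 := List.toFinset_card_le S
  rw [h.card] at h1
  omega

theorem Good.six {C : Set V15} (h : Good C) : ∃ x : Fin 6 → V15, (∀ i, x i ∈ C) ∧
    ∀ i j, Bf (x i) (x j) = if i = j then 0 else 1 := by
  obtain ⟨y1, c1, o1⟩ := h.new [0] (by simp [h.zero]) (by simp)
  obtain ⟨y2, c2, o2⟩ := h.new [0, y1] (by simp [h.zero, *]) (by simp)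
  obtain ⟨y3, c3, o3⟩ := h.new [0, y1, y2] (by simp [h.zero, *]) (by simp)
  obtain ⟨y4, c4, o4⟩ := h.new [0, y1, y2, y3] (by simp [h.zero, *]) (by simp)
  obtain ⟨y5, c5, o5⟩ := h.new [0, y1, y2, y3, y4] (by simp [h.zero, *]) (by simp)
  obtain ⟨y6, c6, o6⟩ := h.new [0, y1, y2, y3, y4, y5] (by simp [h.zero, *]) (by simp)
  simp only [List.mem_cons, List.not_mem_nil, or_false, forall_eq_or_imp, forall_eq] at o1 o2 o3 o4 o5 o6
  have hC : ∀ i, (![y1, y2, y3, y4, y5, y6] : Fin 6 → V15) i ∈ C := by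
    intro i; fin_cases i <;> assumption
  have hz : ∀ i, ¬ oct (hammingDist 0 ((![y1, y2, y3, y4, y5, y6] : Fin 6 → V15) i)) := by
    intro i; fin_cases i <;> simp_all
  have hlt : ∀ i j : Fin 6, i < j → ¬ oct (hammingDist ((![y1, y2, y3, y4, y5, y6] : Fin 6 → V15) i)
      ((![y1, y2, y3, y4, y5, y6] : Fin 6 → V15) j)) := by
    intro i j hij
    fin_cases i <;> fin_cases j <;> first | (exact absurd hij (by decide)) | (simp; tauto)
  refine ⟨_, hC, ?_⟩
  intro i j
  rw [h.Bf_eq (hC i) (hC j)]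
  by_cases e : i = j
  · subst e; simp [oct]
  · have : ¬ oct (hammingDist ((![y1, y2, y3, y4, y5, y6] : Fin 6 → V15) i)
      ((![y1, y2, y3, y4, y5, y6] : Fin 6 → V15) j)) := by
      rcases lt_or_gt_of_ne e with l | l
      · exact hlt i j l
      · rw [hammingDist_comm]; exact hlt j i l
    simp only [hz, this, e, or_false, if_false]

theorem six_inv : ∀ w : Fin 6 → ZMod 2, ∀ j,
    ∑ i, (w i + ∑ k, w k) * (if i = j then 0 else 1) = w j := by
  decide +kernel

/-- Main linear structure. -/
theorem Good.linear {C : Set V15} (h : Good C) :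
    ∃ L : Submodule (ZMod 2) V15, (∀ x, x ∈ L ↔ x ∈ C ∧ oct (hammingDist 0 x)) ∧
      (∀ x ∈ L, ∀ y ∈ C, Bf x y = 0) ∧ ∀ x ∈ C, ∀ l ∈ L, x + l ∈ C := by
  classical
  set U := Submodule.span (ZMod 2) C with hU
  set L := Submodule.span (ZMod 2) (cls C 0 : Set V15) with hL
  have hE : ∀ x ∈ cls C 0, ∀ y ∈ C, Bf x y = 0 := by
    intro x hx y hy
    rw [mem_cls] at hx
    rw [h.Bf_eq hx.1 hy, if_pos (Or.inl hx.2)]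
  have hLC : ∀ x ∈ L, ∀ y ∈ C, Bf x y = 0 := by
    intro x hx y hy
    induction hx using Submodule.span_induction with
    | mem x hx => exact hE x hx y hy
    | zero => simp
    | add a b _ _ ha hb => rw [map_add, LinearMap.add_apply, ha, hb, add_zero]
    | smul c a _ ha => rw [map_smul, LinearMap.smul_apply, ha, smul_zero]
  have hperp : ∀ x, (∀ y ∈ C, Bf x y = 0) → x ∈ Bf.orthogonal U := by
    intro x hx
    rw [LinearMap.BilinForm.mem_orthogonal_iff]
    intro y hy
    rw [Bf_comm]
    induction hy using Submodule.span_induction with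
    | mem y hy => exact hx y hy
    | zero => simp
    | add a b _ _ ha hb => rw [map_add, ha, hb, add_zero]
    | smul c a _ ha => rw [map_smul, ha, smul_zero]
  have hLP : L ≤ Bf.orthogonal U := fun x hx => hperp x (hLC x hx)
  have hLU : L ≤ U := Submodule.span_mono (fun x hx => (mem_cls.1 hx).1)
  have hd := Bf_dim U
  have hf1 : Module.finrank (ZMod 2) L + 6 ≤ Module.finrank (ZMod 2) U := by
    obtain ⟨x, hx, hB⟩ := h.six
    let φ : V15 →ₗ[ZMod 2] (Fin 6 → ZMod 2) := LinearMap.pi (fun j => Bf.flip (x j))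
    have hφ : ∀ v j, φ v j = Bf v (x j) := fun v j => rfl
    have rn := LinearMap.finrank_range_add_finrank_ker (φ.domRestrict U)
    have hs : LinearMap.range (φ.domRestrict U) = ⊤ := by
      rw [LinearMap.range_eq_top]
      intro w
      refine ⟨⟨∑ i, (w i + ∑ k, w k) • x i, ?_⟩, ?_⟩
      · exact Submodule.sum_mem _ (fun i _ => Submodule.smul_mem _ _ (Submodule.subset_span (hx i)))
      · funext j
        rw [LinearMap.domRestrict_apply, hφ]
        simp only [map_sum, map_smul, LinearMap.sum_apply, LinearMap.smul_apply, hB, smul_eq_mul]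
        exact six_inv w j
    have hk : Module.finrank (ZMod 2) L ≤ Module.finrank (ZMod 2) (LinearMap.ker (φ.domRestrict U)) := by
      rw [← (Submodule.comapSubtypeEquivOfLe hLU).finrank_eq]
      refine Submodule.finrank_mono ?_
      intro v hv
      rw [LinearMap.mem_ker]
      funext j
      rw [LinearMap.domRestrict_apply, hφ]
      exact hLC _ hv _ (hx j)
    rw [hs, finrank_top] at rn
    simp only [Module.finrank_fintype_fun_eq_card, Fintype.card_fin] at rn
    omega
  have hf2 : Module.finrank (ZMod 2) L ≤ Module.finrank (ZMod 2) (Bf.orthogonal U) :=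
    Submodule.finrank_mono hLP
  have cardL : (Finset.univ.filter (fun x => x ∈ L)).card = 2 ^ Module.finrank (ZMod 2) L := by
    rw [← Fintype.card_subtype, ← Nat.card_eq_fintype_card]
    have := Module.natCard_eq_pow_finrank (K := ZMod 2) (V := L)
    rw [Nat.card_zmod] at this
    exact this
  have hsub : cls C 0 ⊆ Finset.univ.filter (fun x => x ∈ L) := by
    intro x hx
    exact Finset.mem_filter.2 ⟨Finset.mem_univ _, Submodule.subset_span hx⟩
  have h32 := Finset.card_le_card hsub
  have c32 := h.card_cls h.zero
  have f5 : Module.finrank (ZMod 2) L ≤ 5 := by omega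
  have p5 : 2 ^ Module.finrank (ZMod 2) L ≤ 2 ^ 5 := Nat.pow_le_pow_right (by norm_num) f5
  have eqs := Finset.eq_of_subset_of_card_le hsub (by rw [cardL, c32]; exact p5)
  have g5 : 5 ≤ Module.finrank (ZMod 2) L := by
    rw [c32, cardL] at h32
    by_contra hlt
    have : 2 ^ Module.finrank (ZMod 2) L ≤ 2 ^ 4 := Nat.pow_le_pow_right (by norm_num) (by omega)
    omega
  have hP : L = Bf.orthogonal U := Submodule.eq_of_le_of_finrank_le hLP (by omega)
  have memL : ∀ x, x ∈ L ↔ x ∈ C ∧ oct (hammingDist 0 x) := by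
    intro x
    rw [← mem_cls, eqs]; simp
  refine ⟨L, memL, hLC, ?_⟩
  intro x hx l hl
  -- the class of x is x + L
  have inL : ∀ y ∈ cls C x, x + y ∈ L := by
    intro y hy
    rw [mem_cls] at hy
    rw [hP]
    refine hperp _ (fun z hz => ?_)
    rw [map_add, LinearMap.add_apply, h.Bf_eq hx hz, h.Bf_eq hy.1 hz]
    have sym : oct (hammingDist y x) := by rw [hammingDist_comm]; exact hy.2
    have e1 : oct (hammingDist 0 x) ↔ oct (hammingDist 0 y) := by
      rw [hammingDist_comm 0 x, hammingDist_comm 0 y]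
      have s0 : ∀ a ∈ C, ∀ b ∈ C, oct (hammingDist a b) → oct (hammingDist a 0) →
          oct (hammingDist b 0) := fun a ha b hb o1 o2 => h.oct_trans hb h.zero ha o1 o2
      exact ⟨s0 x hx y hy.1 hy.2, s0 y hy.1 x hx sym⟩
    have e2 : oct (hammingDist x z) ↔ oct (hammingDist y z) :=
      ⟨fun o => h.oct_trans hy.1 hz hx hy.2 o, fun o => h.oct_trans hx hz hy.1 sym o⟩
    simp only [e1, e2]
    split_ifs <;> decide
  have himg : (cls C x).image (fun y => x + y) ⊆ cls C 0 := by
    intro w hw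
    obtain ⟨y, hy, rfl⟩ := Finset.mem_image.1 hw
    exact mem_cls.2 ((memL _).1 (inL y hy))
  have heq := Finset.eq_of_subset_of_card_le himg (by
    rw [Finset.card_image_of_injective _ (add_right_injective x), h.card_cls hx, c32])
  have : l ∈ (cls C x).image (fun y => x + y) := by
    rw [heq]; exact mem_cls.2 ((memL l).1 hl)
  obtain ⟨y, hy, rfl⟩ := Finset.mem_image.1 this
  rw [← add_assoc, add_self15, zero_add]
  exact (mem_cls.1 hy).1

/-- Standard generators of the simplex code. -/
def lstd (j : Fin 4) : V15 := fun i => if (i.val + 1).testBit j.val then 1 else 0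

theorem lstd_surj : ∀ v : Fin 4 → ZMod 2, v ≠ 0 → ∃ i : Fin 15, ∀ j, lstd j i = v j := by
  decide +kernel

theorem lstd_inj : ∀ i i' : Fin 15, (∀ j, lstd j i = lstd j i') → i = i' := by
  decide +kernel

theorem lstd_par : ∀ j, ∑ i, lstd j i = 0 := by decide +kernel

theorem par_nat (x : V15) : ∑ i, x i = ((hammingDist 0 x : ℕ) : ZMod 2) := by
  rw [← wt_ind]; push_cast; simp only [ind_cast]

theorem Good.std {C : Set V15} (h : Good C) : ∃ σ : Equiv.Perm (Fin 15),
    (∀ j, ∀ x ∈ perm15 σ '' C, x + lstd j ∈ perm15 σ '' C) ∧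
    (∀ j, ∀ x ∈ perm15 σ '' C, ∑ i, lstd j i * x i = 0) := by
  classical
  obtain ⟨L, hL, hB, hadd⟩ := h.linear
  let par : V15 →ₗ[ZMod 2] ZMod 2 := ∑ i, LinearMap.proj i
  have hpar : ∀ x, par x = ((hammingDist 0 x : ℕ) : ZMod 2) := by
    intro x
    rw [← par_nat]
    simp [par, LinearMap.sum_apply]
  let L0 : Submodule (ZMod 2) V15 := L ⊓ LinearMap.ker par
  have hL0 : ∀ x, x ∈ L0 ↔ x ∈ C ∧ (hammingDist 0 x = 0 ∨ hammingDist 0 x = 8) := by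
    intro x
    rw [Submodule.mem_inf, hL, LinearMap.mem_ker, hpar]
    constructor
    · rintro ⟨⟨h1, h2⟩, h3⟩
      refine ⟨h1, ?_⟩
      rcases h2 with h2 | h2 | h2 | h2 <;> rw [h2] at h3 ⊢
      · simp
      · exact absurd h3 (by decide)
      · simp
      · exact absurd h3 (by decide)
    · rintro ⟨h1, h2⟩
      rcases h2 with h2 | h2 <;> rw [h2]
      · exact ⟨⟨h1, by simp [oct]⟩, by decide⟩
      · exact ⟨⟨h1, by simp [oct]⟩, by decide⟩
  have H := h.cnts.2.2 0 h.zero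
  have f4 : Module.finrank (ZMod 2) L0 = 4 := by
    have c1 := Module.natCard_eq_pow_finrank (K := ZMod 2) (V := L0)
    rw [Nat.card_zmod] at c1
    have c2 : Nat.card L0 = 16 := by
      have : (Finset.univ.filter (fun x => x ∈ L0)).card = cnt C 0 0 + cnt C 0 8 := by
        rw [← card_Ak, ← card_Ak, ← Finset.card_union_of_disjoint]
        · congr 1
          ext x
          simp only [Finset.mem_filter, Finset.mem_univ, true_and, Finset.mem_union, hL0, Ak, mem_fin15]
          tauto
        · rw [Finset.disjoint_left]
          intro x h1 h2
          have e1 := (Finset.mem_filter.1 h1).2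
          have e2 := (Finset.mem_filter.1 h2).2
          omega
      rw [Nat.card_eq_fintype_card, Fintype.card_subtype, this]
      omega
    rw [c2] at c1
    exact (Nat.pow_right_injective (le_refl 2) (show 2 ^ 4 = 2 ^ _ from c1)).symm
  let b := Module.finBasisOfFinrankEq (ZMod 2) L0 f4
  -- a linear relation satisfied by the basis holds on L0
  have ext0 : ∀ f : V15 →ₗ[ZMod 2] ZMod 2, (∀ j, f (b j : V15) = 0) → ∀ x ∈ L0, f x = 0 := by
    intro f hf x hx
    have : f.comp L0.subtype = 0 := b.ext (fun j => by simpa using hf j)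
    exact LinearMap.congr_fun this ⟨x, hx⟩
  have c7 : ∀ c ∈ Ak C 7, c + one15 ∈ L0 := by
    intro c hc
    obtain ⟨h1, h2⟩ := Finset.mem_filter.1 hc
    rw [hL0]
    exact ⟨h.compl (mem_fin15.1 h1), by rw [hd_one]; omega⟩
  let κ : Fin 15 → Fin 4 → ZMod 2 := fun i j => (b j : V15) i
  have k0 : ∀ a, κ a ≠ 0 := by
    intro a e
    have e1 := ext0 (LinearMap.proj a) (fun j => congrFun e j)
    have e2 : ∀ c ∈ Ak C 7, ind c a = 1 := by
      intro c hc
      have := e1 _ (c7 c hc)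
      have e3 : c a + 1 = 0 := this
      have : c a ≠ 0 := by intro q; rw [q] at e3; exact absurd e3 (by decide)
      simp [ind, this]
    have := h.n7 a
    rw [Finset.sum_congr rfl e2, Finset.sum_const, card_Ak] at this
    simp only [smul_eq_mul] at this
    omega
  have kinj : Function.Injective κ := by
    intro a a' e
    by_contra hne
    let f : V15 →ₗ[ZMod 2] ZMod 2 :=
      { toFun := fun x => x a - x a'
        map_add' := by intro x y; simp only [Pi.add_apply]; ring
        map_smul' := by intro c x; simp only [Pi.smul_apply, smul_eq_mul, RingHom.id_apply]; ring }
    have e1 := ext0 f (fun j => by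
      have := congrFun e j
      exact sub_eq_zero.2 this)
    have e2 : ∀ c ∈ Ak C 7, ind c a * ind c a' = ind c a := by
      intro c hc
      have := e1 _ (c7 c hc)
      have e3 : c a + 1 - (c a' + 1) = 0 := this
      have e4 : c a = c a' := by simpa [sub_eq_zero] using e3
      unfold ind
      rw [e4]; split_ifs <;> rfl
    have s1 := h.n77 hne
    rw [Finset.sum_congr rfl e2, h.n7] at s1
    omega
  choose τ hτ using fun i => lstd_surj (κ i) (k0 i)
  have τinj : Function.Injective τ := by
    intro a a' e
    apply kinj
    funext j
    rw [← hτ a j, ← hτ a' j, e]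
  let σ : Equiv.Perm (Fin 15) := Equiv.ofBijective τ (Finite.injective_iff_bijective.1 τinj)
  have hσ : ∀ j, perm15 σ (b j : V15) = lstd j := by
    intro j
    funext i
    have := hτ (σ.symm i) j
    have e : τ (σ.symm i) = i := σ.apply_symm_apply i
    rw [e] at this
    exact this.symm
  have bC : ∀ j, (b j : V15) ∈ L := fun j => (Submodule.mem_inf.1 (b j).2).1
  refine ⟨σ, ?_, ?_⟩
  · rintro j _ ⟨x, hx, rfl⟩
    refine ⟨x + (b j : V15), hadd x hx _ (bC j), ?_⟩
    rw [← hσ]; rfl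
  · rintro j _ ⟨x, hx, rfl⟩
    have h1 := hB _ (bC j) x hx
    rw [Bf_apply] at h1
    have h2 : ∑ i, (b j : V15) i = 0 := by
      have e := (Submodule.mem_inf.1 (b j).2).2
      rw [LinearMap.mem_ker, hpar, ← par_nat] at e
      exact e
    rw [h2, zero_mul, add_zero] at h1
    rw [← h1, ← hσ]
    exact Equiv.sum_comp σ.symm (fun i => (b j : V15) i * x i)

/-- Word with a given bit mask. -/
def dec (n : ℕ) : V15 := fun i => if n.testBit i.val then 1 else 0

theorem dec_xor (a b : ℕ) : dec (a ^^^ b) = dec a + dec b := by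
  funext i
  simp only [dec, Pi.add_apply, Nat.testBit_xor]
  have key : ∀ u v : Bool, (if (u ^^ v) = true then (1 : ZMod 2) else 0) =
      (if u = true then 1 else 0) + (if v = true then 1 else 0) := by decide
  exact key _ _

theorem dec_surj (x : V15) : ∃ n, n < 2 ^ 15 ∧ dec n = x := by
  refine ⟨Nat.ofBits (fun i : Fin 15 => decide (x i = 1)), Nat.ofBits_lt_two_pow _, ?_⟩
  funext i
  simp only [dec]
  rw [Nat.testBit_ofBits_lt _ _ i.isLt]
  have key : ∀ u : ZMod 2, (if decide (u = 1) = true then (1 : ZMod 2) else 0) = u := by decide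
  exact key _

theorem dec_zero : dec 0 = 0 := by
  funext i; simp [dec]

/-- Population count of the first 15 bits. -/
def pop (n : ℕ) : ℕ := ((List.range 15).map (fun i => (n.testBit i).toNat)).sum

theorem wt_dec (n : ℕ) : hammingDist 0 (dec n) = pop n := by
  rw [← wt_ind]
  have e : ∀ a : Fin 15, ind (dec n) a = (n.testBit a.val).toNat := by
    intro a
    have key : ∀ u : Bool, (if (if u = true then (1 : ZMod 2) else 0) = 0 then 0 else 1) = u.toNat := by
      decide
    exact key _
  simp only [e]
  rw [Fin.sum_univ_eq_sum_range (fun i => (n.testBit i).toNat) 15]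
  simp [pop, List.range_succ, Finset.sum_range_succ]
  try ring

theorem hd_dec (a b : ℕ) : hammingDist (dec a) (dec b) = pop (a ^^^ b) := by
  rw [← wt_dec, dec_xor, ← hd_trans (dec a), add_self15, add_comm]

/-- Conditional mask. -/
def cm (b : Bool) (m : ℕ) : ℕ := bif b then m else 0

theorem cm_testBit (b : Bool) (m i : ℕ) : (cm b m).testBit i = (b && m.testBit i) := by
  cases b <;> simp [cm]

theorem cm_lt (b : Bool) {m : ℕ} (h : m < 2 ^ 15) : cm b m < 2 ^ 15 := by
  cases b <;> simp [cm]; omega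

/-- Combination of the generators. -/
def cmb (b0 b1 b2 b3 b4 : Bool) : ℕ :=
  cm b0 21845 ^^^ cm b1 26214 ^^^ cm b2 30840 ^^^ cm b3 32640 ^^^ cm b4 19252

/-- Words of the simplex code with the all-one word. -/
def Llist : List ℕ := (List.range 32).map (fun k =>
  cmb (k.testBit 0) (k.testBit 1) (k.testBit 2) (k.testBit 3) (k.testBit 4))

theorem cmb_mem : ∀ b0 b1 b2 b3 b4, cmb b0 b1 b2 b3 b4 ∈ Llist := by decide +kernel

/-- Reducing combination for a word. -/
def rc (n : ℕ) : ℕ :=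
  cmb (n.testBit 0) (n.testBit 1) (n.testBit 3) (n.testBit 7)
    (n.testBit 2 ^^ n.testBit 0 ^^ n.testBit 1)

/-- Reduced word. -/
def red (n : ℕ) : ℕ := n ^^^ rc n

theorem rc_mem (n : ℕ) : rc n ∈ Llist := cmb_mem _ _ _ _ _

theorem red_lt {n : ℕ} (h : n < 2 ^ 15) : red n < 2 ^ 15 := by
  refine Nat.xor_lt_two_pow h ?_
  refine Nat.xor_lt_two_pow (Nat.xor_lt_two_pow (Nat.xor_lt_two_pow (Nat.xor_lt_two_pow ?_ ?_) ?_) ?_) ?_ <;>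
  exact cm_lt _ (by norm_num)

theorem gen_bits : ([21845, 26214, 30840, 32640, 19252].map (fun m =>
    [0, 1, 2, 3, 7].map (fun i => Nat.testBit m i))) =
    [[true, false, true, false, false], [false, true, true, false, false],
     [false, false, false, true, false], [false, false, false, false, true],
     [false, false, true, false, false]] := by decide

/-- Bits 0,1,2,3,7 vanish. -/
def zb (n : ℕ) : Prop := ∀ i ∈ [0, 1, 2, 3, 7], n.testBit i = false

theorem red_zb (n : ℕ) : zb (red n) := by
  have g := gen_bits
  simp only [List.map_cons, List.map_nil, List.cons.injEq, and_true] at g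
  obtain ⟨⟨g1, g2, g3, g4, g5⟩, ⟨g6, g7, g8, g9, g10⟩, ⟨g11, g12, g13, g14, g15⟩,
    ⟨g16, g17, g18, g19, g20⟩, g21, g22, g23, g24, g25⟩ := g
  intro i hi
  simp only [List.mem_cons, List.not_mem_nil, or_false] at hi
  rcases hi with rfl | rfl | rfl | rfl | rfl <;>
  simp only [red, rc, cmb, Nat.testBit_xor, cm_testBit, *, Bool.and_true, Bool.and_false] <;>
  cases n.testBit 0 <;> cases n.testBit 1 <;> cases n.testBit 2 <;> cases n.testBit 3 <;>
  cases n.testBit 7 <;> rfl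

theorem zb_xor {a b : ℕ} (ha : zb a) (hb : zb b) : zb (a ^^^ b) := by
  intro i hi
  rw [Nat.testBit_xor, ha i hi, hb i hi]; rfl

theorem zb_form {n : ℕ} (hn : n < 2 ^ 15) (h : zb n) :
    ∃ a ∈ List.range 8, ∃ b ∈ List.range 128, n = 16 * a + 256 * b := by
  have h0 := h 0 (by simp)
  have h1 := h 1 (by simp)
  have h2 := h 2 (by simp)
  have h3 := h 3 (by simp)
  have h7 := h 7 (by simp)
  simp only [Nat.testBit_eq_decide_div_mod_eq, decide_eq_false_iff_not] at h0 h1 h2 h3 h7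
  refine ⟨n / 16 % 8, by simp; omega, n / 256, by simp; omega, by omega⟩

/-- Allowed reduced words. -/
def G0 : List ℕ := [0, 4464, 5904, 6992, 7472, 8816, 10016, 11104, 11824, 13664, 13904, 14624,
  14864, 17520, 18240, 19808, 20048, 21344, 22064, 22848, 23568, 25424, 25904, 27200, 27680,
  28944, 29216, 29760, 30576]

/-- Masks of the standard generators. -/
def lmask : List ℕ := [21845, 26214, 30840, 32640]

theorem G0_check : ∀ a ∈ List.range 8, ∀ b ∈ List.range 128,
    (∀ m ∈ lmask, pop (m &&& (16 * a + 256 * b)) % 2 = 0) →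
    (∀ l ∈ Llist, pop ((16 * a + 256 * b) ^^^ l) = 0 ∨ 5 ≤ pop ((16 * a + 256 * b) ^^^ l)) →
    (16 * a + 256 * b) ∈ G0 := by
  decide +kernel

/-- The eight possible transversals, with a permutation carrying each to the first. -/
def SL : List (List ℕ × ℕ) :=
  [([0, 4464, 10016, 14864, 19808, 22064, 25424, 29760], 1070935975390360080),
   ([0, 4464, 11104, 13904, 18240, 23568, 25904, 29216], 763499623256175120),
   ([0, 5904, 8816, 14624, 20048, 21344, 25904, 29760], 543154130895778320),
   ([0, 5904, 11824, 13664, 17520, 22848, 25424, 29216], 918409395049869840),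
   ([0, 6992, 8816, 13664, 18240, 22064, 27680, 28944], 850590483029963280),
   ([0, 6992, 11824, 14624, 19808, 23568, 27200, 30576], 1003117063370453520),
   ([0, 7472, 10016, 13904, 17520, 21344, 27200, 28944], 610973042915684880),
   ([0, 7472, 11104, 14864, 20048, 22848, 27680, 30576], 695680711236268560)]

theorem SL_check : ∀ a ∈ G0, a ≠ 0 → ∀ b ∈ G0, b ≠ 0 → b ≠ a → a ^^^ b ∈ G0 →
    ∀ c ∈ G0, c ≠ 0 → c ≠ a → c ≠ b → c ≠ a ^^^ b → c ^^^ a ∈ G0 → c ^^^ b ∈ G0 →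
    ∃ p ∈ SL, ∀ t ∈ G0, t ^^^ a ∈ G0 → t ^^^ b ∈ G0 → t ^^^ c ∈ G0 → t ∈ p.1 := by
  decide +kernel

/-- Code with a given transversal. -/
def code (S : List ℕ) : Set V15 := {x | ∃ s ∈ S, ∃ l ∈ Llist, x = dec (s ^^^ l)}

/-- First transversal. -/
def S0 : List ℕ := [0, 4464, 10016, 14864, 19808, 22064, 25424, 29760]

theorem code_of_red {S : List ℕ} {n : ℕ} (h : red n ∈ S) : dec n ∈ code S := by
  refine ⟨red n, h, rc n, rc_mem n, ?_⟩
  rw [red, Nat.xor_assoc, Nat.xor_self, Nat.xor_zero]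

/-- Source coordinate in a packed permutation. -/
def qf (Q : ℕ) (j : Fin 15) : Fin 15 := ⟨(Q >>> (4 * j.val)) % 16 % 15, Nat.mod_lt _ (by norm_num)⟩

/-- Packed permutation acting on masks. -/
def permN (Q n : ℕ) : ℕ := Nat.ofBits (fun j : Fin 15 => n.testBit (qf Q j).val)

theorem dec_permN (Q n : ℕ) : dec (permN Q n) = fun j => dec n (qf Q j) := by
  funext j
  have e : (permN Q n).testBit j.val = n.testBit (qf Q j).val := Nat.testBit_ofBits_lt _ _ j.isLt
  simp only [dec, e]

/-- Checked data. -/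
def chk (Q s : ℕ) (S : List ℕ) : Prop :=
  (∀ a b : Fin 15, qf Q a = qf Q b → a = b) ∧
  (∀ l ∈ Llist, red (permN Q l) = 0) ∧ ∀ a ∈ S, red (permN Q (a ^^^ s)) ∈ S0

theorem Llist_xor : ∀ l ∈ Llist, ∀ m ∈ Llist, l ^^^ m ∈ Llist := by decide +kernel

instance (Q s : ℕ) (S : List ℕ) : Decidable (chk Q s S) := by unfold chk; infer_instance

theorem chk_perm {Q s : ℕ} {S : List ℕ} (h : chk Q s S) : ∃ σ : Equiv.Perm (Fin 15),
    (∀ x i, perm15 σ x i = x (qf Q i)) ∧ ∀ x ∈ code S, perm15 σ (x + dec s) ∈ code S0 := by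
  let τ : Equiv.Perm (Fin 15) := Equiv.ofBijective (qf Q)
    (Finite.injective_iff_bijective.1 (fun a b e => h.1 a b e))
  have e : ∀ x i, perm15 τ.symm x i = x (qf Q i) := fun x i => rfl
  refine ⟨τ.symm, e, ?_⟩
  rintro x ⟨a, ha, l, hl, rfl⟩
  have e1 : ∀ n, perm15 τ.symm (dec n) = dec (permN Q n) := by
    intro n; rw [dec_permN]; exact funext (fun i => e _ i)
  have hl0 : permN Q l = rc (permN Q l) := by
    have h0 := h.2.1 l hl
    rw [red] at h0
    exact Nat.xor_eq_zero_iff.1 h0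
  obtain ⟨t, ht, m, hm, hx⟩ := code_of_red (h.2.2 a ha)
  refine ⟨t, ht, m ^^^ rc (permN Q l), Llist_xor _ hm _ (rc_mem _), ?_⟩
  rw [← Nat.xor_assoc, dec_xor (t ^^^ m), ← hx, ← hl0, ← e1, ← e1]
  funext i
  simp only [e, Pi.add_apply, dec_xor]
  ring

theorem SL_chk : ∀ p ∈ SL, chk p.2 0 p.1 := by decide +kernel

theorem lstd_dec : ∀ j : Fin 4, lstd j = dec (lmask[j.val]'(j.isLt)) := by decide +kernel

theorem one_dec : one15 = dec 32767 := by decide +kernel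

theorem dec_and (a b : ℕ) (i : Fin 15) : dec (a &&& b) i = dec a i * dec b i := by
  simp only [dec, Nat.testBit_and]
  have key : ∀ u v : Bool, (if (u && v) = true then (1 : ZMod 2) else 0) =
      (if u = true then 1 else 0) * (if v = true then 1 else 0) := by decide
  exact key _ _

theorem u_dec : dec 19252 = one15 + lstd 0 + lstd 1 + lstd 2 + lstd 3 := by decide +kernel

theorem Llist_cmb : ∀ l ∈ Llist, ∃ b0 b1 b2 b3 b4, l = cmb b0 b1 b2 b3 b4 := by decide +kernel

/-- Standardised codes lie in one of the eight listed codes. -/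
theorem Good.classify {C : Set V15} (h : Good C) (h1 : ∀ j, ∀ x ∈ C, x + lstd j ∈ C)
    (h2 : ∀ j, ∀ x ∈ C, ∑ i, lstd j i * x i = 0) : ∃ p ∈ SL, C ⊆ code p.1 := by
  classical
  have cmC : ∀ b m, (∀ x ∈ C, x + dec m ∈ C) → ∀ x ∈ C, x + dec (cm b m) ∈ C := by
    intro b m hm x hx
    cases b
    · simpa [cm, dec_zero] using hx
    · exact hm x hx
  have addL : ∀ l ∈ Llist, ∀ x ∈ C, x + dec l ∈ C := by
    intro l hl x hx
    obtain ⟨b0, b1, b2, b3, b4, rfl⟩ := Llist_cmb l hl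
    simp only [cmb, dec_xor, ← add_assoc]
    refine cmC _ _ ?_ _ (cmC _ _ ?_ _ (cmC _ _ ?_ _ (cmC _ _ ?_ _ (cmC _ _ ?_ _ hx))))
    · intro x hx
      rw [u_dec]
      simp only [← add_assoc]
      exact h1 _ _ (h1 _ _ (h1 _ _ (h1 _ _ (h.compl hx))))
    · exact fun x hx => (lstd_dec 3) ▸ h1 3 x hx
    · exact fun x hx => (lstd_dec 2) ▸ h1 2 x hx
    · exact fun x hx => (lstd_dec 1) ▸ h1 1 x hx
    · exact fun x hx => (lstd_dec 0) ▸ h1 0 x hx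
  have par : ∀ n, (∀ j, ∑ i, lstd j i * dec n i = 0) → ∀ m ∈ lmask, pop (m &&& n) % 2 = 0 := by
    intro n hn m hm
    obtain ⟨k, hk, rfl⟩ := List.mem_iff_getElem.1 hm
    have e := hn ⟨k, hk⟩
    rw [lstd_dec] at e
    simp only [← dec_and] at e
    rw [par_nat, wt_dec] at e
    exact Nat.mod_eq_zero_of_dvd ((ZMod.natCast_eq_zero_iff _ _).1 e)
  -- differences of reduced codewords are allowed
  have diff : ∀ a b, a < 2 ^ 15 → b < 2 ^ 15 → zb a → zb b → dec a ∈ C → dec b ∈ C → a ^^^ b ∈ G0 := by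
    intro a b ha hb za zb' ca cb
    obtain ⟨p, hp, q, hq, e⟩ := zb_form (Nat.xor_lt_two_pow ha hb) (zb_xor za zb')
    have G := G0_check p hp q hq
    rw [← e] at G
    refine G (par _ (fun j => ?_)) (fun l hl => ?_)
    · rw [dec_xor]
      simp only [Pi.add_apply, mul_add, Finset.sum_add_distrib, h2 j _ ca, h2 j _ cb, add_zero]
    · have e1 := addL l hl _ cb
      have e2 := h.dist ca e1
      rw [← dec_xor, hd_dec, ← Nat.xor_assoc] at e2
      omega
  have z0 : zb 0 := by intro i _; simp
  have c0 : dec 0 ∈ C := by rw [dec_zero]; exact h.zero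
  obtain ⟨R, hR⟩ : ∃ R : Finset ℕ, ∀ n, n ∈ R ↔ n < 2 ^ 15 ∧ zb n ∧ dec n ∈ C := by
    refine ⟨(Finset.range (2 ^ 15)).filter (fun n => zb n ∧ dec n ∈ C), fun n => ?_⟩
    rw [Finset.mem_filter, Finset.mem_range]
  have dR : ∀ a ∈ R, ∀ b ∈ R, a ^^^ b ∈ G0 := by
    intro a ha b hb
    rw [hR] at ha hb
    exact diff a b ha.1 hb.1 ha.2.1 hb.2.1 ha.2.2 hb.2.2
  have dR0 : ∀ a ∈ R, a ∈ G0 := by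
    intro a ha
    have := dR a ha 0 ((hR 0).2 ⟨by norm_num, z0, c0⟩)
    simpa using this
  have repr : ∀ x ∈ C, ∃ r ∈ R, ∃ l ∈ Llist, x = dec (r ^^^ l) := by
    intro x hx
    obtain ⟨n, hn, rfl⟩ := dec_surj x
    refine ⟨red n, (hR _).2 ⟨red_lt hn, red_zb n, ?_⟩, rc n, rc_mem n, ?_⟩
    · rw [red, dec_xor]; exact addL _ (rc_mem n) _ hx
    · rw [red, Nat.xor_assoc, Nat.xor_self, Nat.xor_zero]
  have card : 8 ≤ R.card := by
    have sub : fin15 C ⊆ (R ×ˢ Llist.toFinset).image (fun p => dec (p.1 ^^^ p.2)) := by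
      intro x hx
      obtain ⟨r, hr, l, hl, e⟩ := repr x (mem_fin15.1 hx)
      exact Finset.mem_image.2 ⟨(r, l), Finset.mem_product.2 ⟨hr, List.mem_toFinset.2 hl⟩, e.symm⟩
    have c1 := (Finset.card_le_card sub).trans Finset.card_image_le
    rw [Finset.card_product, h.card] at c1
    have c2 : Llist.toFinset.card ≤ 32 := (List.toFinset_card_le _).trans (by simp [Llist])
    have c3 : R.card * Llist.toFinset.card ≤ R.card * 32 := Nat.mul_le_mul_left _ c2
    omega
  have pick : ∀ S : Finset ℕ, S.card ≤ 7 → ∃ r ∈ R, r ∉ S := by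
    intro S hS
    exact Finset.exists_mem_notMem_of_card_lt_card (by omega)
  obtain ⟨a, ha, na⟩ := pick {0} (by simp)
  obtain ⟨b, hb, nb⟩ := pick {0, a} (Finset.card_le_two.trans (by norm_num))
  obtain ⟨c, hc, nc⟩ := pick {0, a, b, a ^^^ b} (Finset.card_le_four.trans (by norm_num))
  simp only [Finset.mem_insert, Finset.mem_singleton, not_or] at na nb nc
  obtain ⟨p, hp, H⟩ := SL_check a (dR0 a ha) na b (dR0 b hb) nb.1 nb.2 (dR a ha b hb)
    c (dR0 c hc) nc.1 nc.2.1 nc.2.2.1 nc.2.2.2 (dR c hc a ha) (dR c hc b hb)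
  refine ⟨p, hp, ?_⟩
  intro x hx
  obtain ⟨r, hr, l, hl, e⟩ := repr x hx
  exact ⟨r, H r (dR0 r hr) (dR r hr a ha) (dR r hr b hb) (dR r hr c hc), l, hl, e⟩

theorem Good.eq_code {C : Set V15} (h : Good C) (hs : C ⊆ code S0) : C = code S0 := by
  classical
  have sub : fin15 C ⊆ fin15 (code S0) := fun x hx => mem_fin15.2 (hs (mem_fin15.1 hx))
  have c1 : (fin15 (code S0)).card ≤ 256 := by
    have s2 : fin15 (code S0) ⊆ (S0.toFinset ×ˢ Llist.toFinset).image (fun p => dec (p.1 ^^^ p.2)) := by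
      intro x hx
      obtain ⟨r, hr, l, hl, e⟩ := mem_fin15.1 hx
      exact Finset.mem_image.2 ⟨(r, l), Finset.mem_product.2
        ⟨List.mem_toFinset.2 hr, List.mem_toFinset.2 hl⟩, e.symm⟩
    have c1 := (Finset.card_le_card s2).trans Finset.card_image_le
    rw [Finset.card_product] at c1
    have c2 : Llist.toFinset.card ≤ 32 := (List.toFinset_card_le _).trans (by simp [Llist])
    have c3 : S0.toFinset.card ≤ 8 := (List.toFinset_card_le _).trans (by simp [S0])
    have := Nat.mul_le_mul c3 c2
    omega
  have e := Finset.eq_of_subset_of_card_le sub (by rw [h.card]; exact c1)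
  ext x
  rw [← mem_fin15, e, mem_fin15]

/-- Permutations moving a given coordinate to the first position. -/
def hT : List ℕ := [1070935975390360080, 547376319969964545, 859298747979804930, 1057673610298463235,
  899469358322291460, 836734389678446085, 976854150319183110, 267055804763936775,
  425260056706684680, 487995025316583945, 347875264642423050, 596509699875871755,
  745741800033884940, 664922340088028685, 533774731198602510]

/-- Permutations fixing the first coordinate and moving a given one to the second position. -/
def kT : List ℕ := [1070935975390360080, 695944598037737760, 543749928758940720, 765023130013012800,
  612166965941900880, 697133866393146720, 1069143890693593200, 847870689408063360,
  1000726853439330960, 915759952956627360, 390022370478398640, 303859219598285760,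
  457243157263949520, 237166206375828960]

/-- Permutations correcting a translation by a transversal element. -/
def sT : List ℕ := [1070935975390360080, 763499623256175120, 610973042915684880, 695680711236268560,
  1003117063370453520, 850590483029963280, 918409395049869840, 543154130895778320]

theorem hT_chk : ∀ Q ∈ hT ++ kT, chk Q 0 S0 := by decide +kernel
theorem hT_all : ∀ a : Fin 15, ∃ Q ∈ hT ++ kT, qf Q 0 = a := by decide +kernel
theorem kT_all : ∀ b : Fin 15, b ≠ 0 → ∃ Q ∈ hT ++ kT, qf Q 0 = 0 ∧ qf Q 1 = b := by decide +kernel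
theorem sT_chk : ∀ p ∈ S0.zip sT, chk p.2 p.1 S0 := by decide +kernel
theorem sT_all : ∀ s ∈ S0, ∃ p ∈ S0.zip sT, p.1 = s := by decide +kernel

theorem close_chk : ∀ t : Fin 15, t ≠ 0 → t ≠ 1 → t ≠ 2 →
    ∃ s ∈ S0, ∃ l ∈ Llist, pop ((3 ||| 2 ^ t.val) ^^^ (s ^^^ l)) ≤ 2 := by decide +kernel


/-- The stabiliser of the code in the automorphism group. -/
def stab15 (C : Set V15) : Subgroup (Equiv.Perm V15) where
  carrier := {g | IsHammingAut g ∧ ⇑g '' C = C}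
  mul_mem' := by
    rintro f g ⟨h1, h2⟩ ⟨h3, h4⟩
    refine ⟨haut_mul h1 h3, ?_⟩
    rw [Equiv.Perm.coe_mul, Set.image_comp, h4, h2]
  one_mem' := ⟨haut_one, by simp⟩
  inv_mem' := by
    rintro f ⟨h1, h2⟩
    refine ⟨haut_inv h1, ?_⟩
    nth_rewrite 1 [← h2]
    rw [← Set.image_comp]
    have : (⇑f⁻¹ ∘ ⇑f) = id := by funext x; simp
    rw [this, Set.image_id]

theorem mem_stab {C : Set V15} {f : Equiv.Perm V15} (hf : IsHammingAut f) (h : ∀ x ∈ C, f x ∈ C) :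
    f ∈ stab15 C := by
  refine ⟨hf, ?_⟩
  have s : ⇑f '' C ⊆ C := by rintro _ ⟨x, hx, rfl⟩; exact h x hx
  refine Set.eq_of_subset_of_ncard_le s ?_ (Set.toFinite _)
  rw [Set.ncard_image_of_injective _ f.injective]

/-- Indicator word of a set of coordinates. -/
def indT (T : Finset (Fin 15)) : V15 := fun i => if i ∈ T then 1 else 0

theorem eq_indT {x : V15} {T : Finset (Fin 15)} (h : ∀ i ∈ T, x i ≠ 0)
    (hc : hammingDist 0 x ≤ T.card) : x = indT T := by
  have e : T = Finset.univ.filter (fun i => (0 : V15) i ≠ x i) := by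
    refine Finset.eq_of_subset_of_card_le (fun i hi => ?_) hc
    simp only [Finset.mem_filter, Finset.mem_univ, true_and, Pi.zero_apply]
    exact (h i hi).symm
  funext i
  have key : ∀ u : ZMod 2, 0 ≠ u → u = 1 := by decide
  simp only [indT]
  by_cases hi : i ∈ T
  · rw [if_pos hi]
    exact key _ (h i hi).symm
  · rw [if_neg hi]
    rw [e] at hi
    simp only [Finset.mem_filter, Finset.mem_univ, true_and, Pi.zero_apply, not_not] at hi
    exact hi.symm

theorem exists_one15 {x : V15} {T : Finset (Fin 15)} (hc : T.card < hammingDist 0 x) :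
    ∃ i, i ∉ T ∧ x i ≠ 0 := by
  by_contra! H
  have : Finset.univ.filter (fun i => (0 : V15) i ≠ x i) ⊆ T := by
    intro i hi
    simp only [Finset.mem_filter, Finset.mem_univ, true_and, Pi.zero_apply] at hi
    by_contra hT
    exact hi (H i hT).symm
  have := Finset.card_le_card this
  unfold hammingDist at hc
  omega

theorem indT_dec : ∀ t : Fin 15, t ≠ 0 → t ≠ 1 → indT {0, 1, t} = dec (3 ||| 2 ^ t.val) := by
  decide +kernel

/-- Representative of a cell. -/
def rep15 (i : ℕ) : V15 := if i = 0 then 0 else if i = 1 then indT {0} else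
  if i = 2 then indT {0, 1} else indT {0, 1, 2}

theorem reach {x : V15} (h : Good (code S0)) :
    ∃ g ∈ stab15 (code S0), g x = rep15 (distToCode (code S0) x) := by
  have dCst : ∀ g ∈ stab15 (code S0), ∀ y, distToCode (code S0) (g y) = distToCode (code S0) y := by
    rintro g ⟨h1, h2⟩ y
    have := dC_image h1 (code S0) y
    rw [h2] at this
    exact this
  -- first move a nearest codeword to zero
  obtain ⟨c, hc, e⟩ := dC_attained h.ne x
  have step0 : ∃ g ∈ stab15 (code S0), g c = 0 := by
    obtain ⟨s, hs, l, hl, rfl⟩ := hc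
    obtain ⟨p, hp, rfl⟩ := sT_all s hs
    obtain ⟨σ, hσ, hC⟩ := chk_perm (sT_chk p hp)
    refine ⟨perm15 σ * trans15 (dec p.1) * trans15 (dec l), ?_, ?_⟩
    · refine mul_mem (mem_stab (haut_mul (haut_perm _) (haut_trans _)) hC) (mem_stab (haut_trans _) ?_)
      rintro _ ⟨a, ha, m, hm, rfl⟩
      refine ⟨a, ha, m ^^^ l, Llist_xor m hm l hl, ?_⟩
      rw [← Nat.xor_assoc, dec_xor _ l]; rfl
    · show perm15 σ (dec (p.1 ^^^ l) + dec l + dec p.1) = 0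
      rw [dec_xor, add_assoc (dec p.1), add_self15, add_zero, add_self15]
      rfl
  obtain ⟨g, hg, gc⟩ := step0
  have permst : ∀ Q ∈ hT ++ kT, ∃ f ∈ stab15 (code S0), (∀ y i, f y i = y (qf Q i)) ∧
      ∀ y, hammingDist 0 (f y) = hammingDist 0 y := by
    intro Q hQ
    obtain ⟨σ, hσ, hC⟩ := chk_perm (hT_chk Q hQ)
    simp only [dec_zero, add_zero] at hC
    refine ⟨perm15 σ, mem_stab (haut_perm σ) hC, hσ, fun y => ?_⟩
    have := haut_dist (haut_perm σ) 0 y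
    exact this
  have w1 : hammingDist 0 (g x) = distToCode (code S0) x := by
    rw [← gc, haut_dist hg.1, hammingDist_comm, e]
  have le3 := covering h.ne h.reg h.md x
  generalize hi : distToCode (code S0) x = i at *
  by_cases i0 : i = 0
  · subst i0
    refine ⟨g, hg, ?_⟩
    rw [hammingDist_eq_zero] at w1
    rw [← w1]; rfl
  obtain ⟨a, -, ha⟩ := exists_one15 (x := g x) (T := ∅) (by rw [w1, Finset.card_empty]; omega)
  obtain ⟨Q1, hQ1, q1⟩ := hT_all a
  obtain ⟨f1, hf1, f1a, f1w⟩ := permst Q1 hQ1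
  have v1 : f1 (g x) 0 ≠ 0 := by rw [f1a, q1]; exact ha
  have w2 : hammingDist 0 (f1 (g x)) = i := by rw [f1w, w1]
  by_cases i1 : i = 1
  · subst i1
    refine ⟨f1 * g, mul_mem hf1 hg, ?_⟩
    show f1 (g x) = indT {0}
    refine eq_indT ?_ (by rw [w2]; simp)
    simpa using v1
  obtain ⟨b, hb0, hb⟩ := exists_one15 (x := f1 (g x)) (T := {0}) (by rw [w2, Finset.card_singleton]; omega)
  obtain ⟨Q2, hQ2, q2, q2'⟩ := kT_all b (by simpa using hb0)
  obtain ⟨f2, hf2, f2a, f2w⟩ := permst Q2 hQ2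
  have v2 : f2 (f1 (g x)) 0 ≠ 0 := by rw [f2a, q2]; exact v1
  have v3 : f2 (f1 (g x)) 1 ≠ 0 := by rw [f2a, q2']; exact hb
  have w3 : hammingDist 0 (f2 (f1 (g x))) = i := by rw [f2w, w2]
  refine ⟨f2 * f1 * g, mul_mem (mul_mem hf2 hf1) hg, ?_⟩
  show f2 (f1 (g x)) = rep15 i
  have dd : distToCode (code S0) (f2 (f1 (g x))) = i := by
    rw [dCst f2 hf2, dCst f1 hf1, dCst g hg, hi]
  generalize f2 (f1 (g x)) = y at *
  by_cases i2 : i = 2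
  · subst i2
    show y = indT {0, 1}
    refine eq_indT ?_ (by rw [w3]; decide)
    intro k hk
    simp only [Finset.mem_insert, Finset.mem_singleton] at hk
    rcases hk with rfl | rfl
    · exact v2
    · exact v3
  have i3 : i = 3 := by omega
  subst i3
  obtain ⟨t, ht, hyt⟩ := exists_one15 (x := y) (T := {0, 1}) (by rw [w3]; decide)
  simp only [Finset.mem_insert, Finset.mem_singleton, not_or] at ht
  have card3 : ∀ t : Fin 15, t ≠ 0 → t ≠ 1 → 3 ≤ Finset.card {0, 1, t} := by decide +kernel
  have ey : y = indT {0, 1, t} := by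
    refine eq_indT ?_ (by rw [w3]; exact card3 t ht.1 ht.2)
    intro k hk
    simp only [Finset.mem_insert, Finset.mem_singleton] at hk
    rcases hk with rfl | rfl | rfl
    · exact v2
    · exact v3
    · exact hyt
  by_cases t2 : t = 2
  · subst t2; exact ey
  exfalso
  obtain ⟨s, hs, l, hl, hp⟩ := close_chk t ht.1 ht.2 t2
  have := dC_le (C := code S0) ⟨s, hs, l, hl, rfl⟩ y
  rw [dd, ey, indT_dec t ht.1 ht.2, hd_dec] at this
  omega

theorem ct_S0 (h : Good (code S0)) : IsCompletelyTransitive (code S0) := by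
  refine ⟨stab15 (code S0), fun g hg => hg, ?_⟩
  rintro i x rfl
  ext y
  show distToCode (code S0) y = distToCode (code S0) x ↔ ∃ g ∈ stab15 (code S0), g x = y
  constructor
  · intro hy
    obtain ⟨g, hg, e⟩ := reach (x := x) h
    obtain ⟨f, hf, e'⟩ := reach (x := y) h
    refine ⟨f⁻¹ * g, mul_mem (inv_mem hf) hg, ?_⟩
    rw [Equiv.Perm.mul_apply, e, ← hy, ← e']
    exact f.symm_apply_apply y
  · rintro ⟨g, ⟨h1, h2⟩, rfl⟩
    have := dC_image h1 (code S0) x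
    rw [h2] at this
    exact this

theorem main15 (C : Set V15) (hC : C.Nonempty) (hreg : IsCompletelyRegular C) (hd : IsMinDist C 5) :
    IsCompletelyTransitive C := by
  obtain ⟨z, hz⟩ := hC
  refine ct_of_image (haut_trans z) ?_
  have g1 : Good (trans15 z '' C) := ⟨⟨z, hz, add_self15 z⟩, cr_image (haut_trans z) hreg,
    md_image (haut_trans z) hd⟩
  generalize trans15 z '' C = D at g1
  obtain ⟨σ, h1, h2⟩ := g1.std
  refine ct_of_image (haut_perm σ) ?_
  have g2 := g1.perm σ
  generalize perm15 σ '' D = E at *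
  obtain ⟨p, hp, hs⟩ := g2.classify h1 h2
  obtain ⟨τ, -, hτ⟩ := chk_perm (SL_chk p hp)
  simp only [dec_zero, add_zero] at hτ
  refine ct_of_image (haut_perm τ) ?_
  have g3 := g2.perm τ
  have e := g3.eq_code (by rintro _ ⟨x, hx, rfl⟩; exact hτ x (hs hx))
  rw [e] at g3 ⊢
  exact ct_S0 g3

/-- Every binary completely regular code of length 15 with minimum distance 5 is
completely transitive. -/
theorem stmt_3 (C : Set (Fin 15 → ZMod 2)) (hC : C.Nonempty)
    (hreg : IsCompletelyRegular C) (hd : IsMinDist C 5) :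
    IsCompletelyTransitive C := by
  exact main15 C hC hreg hd
end

section
/- Every binary completely regular code of length 16 with minimum distance 6 has exactly 256 codewords. -/
open Set

abbrev VV := Fin 16 → ZMod 2

def flp (x : VV) (i : Fin 16) : VV := Function.update x i (x i + 1)

theorem z2 (a b : ZMod 2) (h : a ≠ b) : a + 1 = b := by
  revert a b; decide

theorem z2' (a : ZMod 2) : a + 1 ≠ a := by
  revert a; decide

theorem flp_flp (x : VV) (i : Fin 16) : flp (flp x i) i = x := by
  funext j
  by_cases h : j = i
  · subst h
    simp only [flp, Function.update_self]
    generalize x j = a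
    revert a; decide
  · simp [flp, h]

theorem flp_comm (x : VV) (i j : Fin 16) : flp (flp x i) j = flp (flp x j) i := by
  by_cases h : i = j
  · subst h; rfl
  · unfold flp
    rw [Function.update_of_ne (Ne.symm h), Function.update_of_ne h, Function.update_comm h]

theorem flp_inj (x : VV) (i j : Fin 16) (h : flp x i = flp x j) : i = j := by
  by_contra hne
  have := congrFun h i
  simp only [flp, Function.update_self, Function.update_of_ne hne] at this
  exact z2' _ this

theorem dist_flp_ne (x c : VV) (i : Fin 16) (h : x i ≠ c i) :
    hammingDist (flp x i) c + 1 = hammingDist x c := by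
  unfold hammingDist
  have : ({j | x j ≠ c j} : Finset (Fin 16)) = insert i ({j | flp x i j ≠ c j} : Finset (Fin 16)) := by
    ext j
    by_cases hj : j = i
    · subst hj; simp [h]
    · have e : flp x i j = x j := by simp [flp, hj]
      simp [e, hj]
  rw [this, Finset.card_insert_of_notMem]
  simp [flp, z2 _ _ h]

theorem dist_flp_eq (x c : VV) (i : Fin 16) (h : x i = c i) :
    hammingDist (flp x i) c = hammingDist x c + 1 := by
  have h2 : flp x i i ≠ c i := by
    simp only [flp, Function.update_self]; rw [h]; exact z2' _
  have := dist_flp_ne (flp x i) c i h2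
  rw [flp_flp] at this
  exact this.symm

theorem exists_down (x c : VV) (h : hammingDist x c ≠ 0) :
    ∃ i, x i ≠ c i := by
  by_contra hh
  push Not at hh
  exact h (by rw [hammingDist_eq_zero]; funext i; exact hh i)

def nn (C : Finset VV) (x : VV) (k : ℕ) : ℕ := (C.filter (fun c => hammingDist x c = k)).card

theorem count_one (x c : VV) (k : ℕ) :
    (Finset.univ.filter (fun i => hammingDist (flp x i) c = k + 1)).card
      = (if hammingDist x c = k + 2 then k + 2 else 0)
        + (if hammingDist x c = k then 16 - k else 0) := by
  by_cases h1 : hammingDist x c = k + 2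
  · have h2 : hammingDist x c ≠ k := by omega
    rw [if_pos h1, if_neg h2, ← h1, hammingDist]
    congr 1
    ext i
    by_cases hi : x i = c i
    · have := dist_flp_eq x c i hi
      simp only [Finset.mem_filter, Finset.mem_univ, true_and, hi, ne_eq, not_true, iff_false]
      omega
    · have := dist_flp_ne x c i hi
      simp only [Finset.mem_filter, Finset.mem_univ, true_and, hi, ne_eq, not_false_iff, iff_true]
      omega
  · rw [if_neg h1]
    by_cases h2 : hammingDist x c = k
    · rw [if_pos h2]
      have hc := Finset.card_compl (Finset.univ.filter (fun i => x i ≠ c i))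
      have hk : (Finset.univ.filter (fun i => x i ≠ c i)).card = k := h2
      rw [Fintype.card_fin, hk] at hc
      rw [zero_add, ← hc]
      congr 1
      ext i
      by_cases hi : x i = c i
      · have := dist_flp_eq x c i hi
        simp [hi, this, h2]
      · have := dist_flp_ne x c i hi
        simp only [Finset.mem_filter, Finset.mem_univ, true_and, Finset.mem_compl, hi, ne_eq,
          not_false_iff, not_true, iff_false]
        omega
    · rw [if_neg h2, Finset.card_eq_zero, Finset.filter_eq_empty_iff]
      intro i _
      by_cases hi : x i = c i
      · have := dist_flp_eq x c i hi
        omega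
      · have := dist_flp_ne x c i hi
        omega

theorem sum_nn (C : Finset VV) (x : VV) (k : ℕ) :
    ∑ i, nn C (flp x i) (k + 1) = (k + 2) * nn C x (k + 2) + (16 - k) * nn C x k := by
  simp only [nn, Finset.card_filter]
  rw [Finset.sum_comm, Finset.mul_sum, Finset.mul_sum, ← Finset.sum_add_distrib]
  apply Finset.sum_congr rfl
  intro c _
  have := count_one x c k
  rw [Finset.card_filter] at this
  rw [this]
  simp

/-- number of neighbours in layer `j` -/
def pp (D : VV → ℕ) (x : VV) (j : ℕ) : ℕ := (Finset.univ.filter (fun i => D (flp x i) = j)).card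

theorem pp_pos (D : VV → ℕ) (x : VV) (j : ℕ) (h : pp D x j ≠ 0) : ∃ i, D (flp x i) = j := by
  obtain ⟨i, hi⟩ := Finset.card_ne_zero.mp h
  exact ⟨i, by simpa using hi⟩

theorem pp_split (D : VV → ℕ) (x : VV) (d : ℕ) (f : ℕ → ℕ)
    (h : ∀ i, D (flp x i) = d ∨ D (flp x i) = d + 1 ∨ D (flp x i) = d + 2) :
    ∑ i, f (D (flp x i)) = pp D x d * f d + pp D x (d+1) * f (d+1) + pp D x (d+2) * f (d+2) := by
  simp only [pp, Finset.card_filter, Finset.sum_mul]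
  rw [← Finset.sum_add_distrib, ← Finset.sum_add_distrib]
  apply Finset.sum_congr rfl
  intro i _
  rcases h i with h | h | h <;> simp [h]

theorem double_count (D : VV → ℕ) (a b p q : ℕ) (h1 : ∀ x, D x = a → pp D x b = p)
    (h2 : ∀ x, D x = b → pp D x a = q) :
    (Finset.univ.filter (fun x => D x = a)).card * p
      = (Finset.univ.filter (fun x => D x = b)).card * q := by
  have key : ∀ (x : VV) (j : ℕ), pp D x j
      = (Finset.univ.filter (fun y => D y = j ∧ ∃ i, y = flp x i)).card := by
    intro x j
    unfold pp
    apply Finset.card_bij (fun i _ => flp x i)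
    · intro i hi
      simp only [Finset.mem_filter, Finset.mem_univ, true_and] at hi ⊢
      exact ⟨hi, i, rfl⟩
    · intro i _ j _ h
      exact flp_inj x i j h
    · intro y hy
      simp only [Finset.mem_filter, Finset.mem_univ, true_and] at hy
      obtain ⟨hy, i, rfl⟩ := hy
      exact ⟨i, by simpa using hy, rfl⟩
  apply Finset.card_mul_eq_card_mul (fun x y => ∃ i, y = flp x i)
  · intro x hx
    rw [← h1 x (by simpa using hx), key, Finset.bipartiteAbove, Finset.filter_filter]
  · intro y hy
    rw [← h2 y (by simpa using hy), key, Finset.bipartiteBelow, Finset.filter_filter]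
    congr 1
    ext x
    simp only [Finset.mem_filter, Finset.mem_univ, true_and]
    constructor
    · rintro ⟨h, i, rfl⟩
      exact ⟨h, i, (flp_flp x i).symm⟩
    · rintro ⟨h, i, rfl⟩
      exact ⟨h, i, (flp_flp y i).symm⟩

theorem main_aux (C : Finset VV) (D : VV → ℕ) (B : ℕ → ℕ → ℕ)
    (hD1 : ∀ x, ∃ c ∈ C, hammingDist x c = D x)
    (hD2 : ∀ x, ∀ c ∈ C, D x ≤ hammingDist x c)
    (hB : ∀ x k, nn C x k = B (D x) k)
    (hB0 : ∀ j k, k < j → B j k = 0)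
    (hm : ∀ x ∈ C, ∀ y ∈ C, x ≠ y → 6 ≤ hammingDist x y)
    (hm2 : ∃ x ∈ C, ∃ y ∈ C, x ≠ y ∧ hammingDist x y = 6) :
    C.card = 256 := by
  have hstep : ∀ x i, D (flp x i) ≤ D x + 1 := by
    intro x i
    obtain ⟨c, hc, h⟩ := hD1 x
    have h2 := hD2 (flp x i) c hc
    by_cases hi : x i = c i
    · have := dist_flp_eq x c i hi; omega
    · have := dist_flp_ne x c i hi; omega
  have hstep2 : ∀ x i, D x ≤ D (flp x i) + 1 := by
    intro x i
    have := hstep (flp x i) i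
    rwa [flp_flp] at this
  have hdown : ∀ x d, D x = d + 1 → ∃ i, D (flp x i) = d := by
    intro x d h
    obtain ⟨c, hc, h'⟩ := hD1 x
    obtain ⟨i, hi⟩ := exists_down x c (by omega)
    have h1 := dist_flp_ne x c i hi
    have h2 := hD2 (flp x i) c hc
    have h3 := hstep2 x i
    exact ⟨i, by omega⟩
  have htri : ∀ x d, D x = d + 1 → ∀ i,
      D (flp x i) = d ∨ D (flp x i) = d + 1 ∨ D (flp x i) = d + 2 := by
    intro x d h i
    have h1 := hstep x i
    have h2 := hstep2 x i
    omega
  have E : ∀ x d k, D x = d + 1 → (k + 2) * B (d+1) (k + 2) + (16 - k) * B (d+1) k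
      = pp D x d * B d (k+1) + pp D x (d+1) * B (d+1) (k+1) + pp D x (d+2) * B (d+2) (k+1) := by
    intro x d k h
    have h1 := sum_nn C x k
    simp only [hB] at h1
    rw [h] at h1
    rw [← h1]
    exact pp_split D x d (fun j => B j (k+1)) (htri x d h)
  have E16 : ∀ x d, D x = d + 1 → pp D x d + pp D x (d+1) + pp D x (d+2) = 16 := by
    intro x d h
    have := pp_split D x d (fun _ => 1) (htri x d h)
    simp at this
    exact this.symm
  -- uniqueness
  have huniq : ∀ x c c' : VV, c ∈ C → c' ∈ C → hammingDist x c + hammingDist x c' < 6 → c = c' := by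
    intro x c c' hc hc' h
    by_contra hne
    have h1 := hm c hc c' hc' hne
    have h2 := hammingDist_triangle_left c c' x
    omega
  have hone : ∀ x, D x ≤ 2 → B (D x) (D x) = 1 := by
    intro x h
    rw [← hB, nn, Finset.card_eq_one]
    obtain ⟨c, hc, h'⟩ := hD1 x
    refine ⟨c, ?_⟩
    ext c'
    simp only [Finset.mem_filter, Finset.mem_singleton]
    constructor
    · rintro ⟨h1, h2⟩
      exact huniq x c' c h1 hc (by omega)
    · rintro rfl
      exact ⟨hc, h'⟩
  have hzero : ∀ x k, k ≠ D x → k + D x < 6 → B (D x) k = 0 := by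
    intro x k hk h
    rw [← hB, nn, Finset.card_eq_zero, Finset.filter_eq_empty_iff]
    intro c' hc' h2
    obtain ⟨c, hc, h'⟩ := hD1 x
    have := huniq x c' c hc' hc (by omega)
    subst this
    omega
  -- a vertex in layer 3 with two codewords
  obtain ⟨x3, hx3, hB33⟩ : ∃ x, D x = 3 ∧ 2 ≤ B 3 3 := by
    obtain ⟨c, hc, c', hc', hne, h6⟩ := hm2
    have go : ∀ n, n ≤ 3 → ∃ y, hammingDist y c = n ∧ hammingDist y c' + n = 6 := by
      intro n
      induction n with
      | zero => intro _; exact ⟨c, by simp, by omega⟩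
      | succ n ih =>
        intro hn
        obtain ⟨y, h1, h2⟩ := ih (by omega)
        obtain ⟨i, hi⟩ := exists_down y c' (by omega)
        refine ⟨flp y i, ?_, ?_⟩
        · have a1 := dist_flp_ne y c' i hi
          have a2 := hammingDist_triangle_left c c' (flp y i)
          by_cases hi2 : y i = c i
          · rw [dist_flp_eq y c i hi2, h1]
          · have := dist_flp_ne y c i hi2
            omega
        · have := dist_flp_ne y c' i hi
          omega
    obtain ⟨y, h1, h2⟩ := go 3 le_rfl
    have hy : D y = 3 := by
      have a := hD2 y c hc
      by_contra hcon
      obtain ⟨c'', hc'', h''⟩ := hD1 y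
      exact hne ((huniq y c'' c hc'' hc (by omega)).symm.trans (huniq y c'' c' hc'' hc' (by omega)))
    refine ⟨y, hy, ?_⟩
    have := hB y 3
    rw [hy] at this
    rw [← this, nn]
    have : ({c, c'} : Finset VV) ⊆ C.filter (fun z => hammingDist y z = 3) := by
      intro z hz
      simp only [Finset.mem_insert, Finset.mem_singleton] at hz
      rw [Finset.mem_filter]
      rcases hz with rfl | rfl
      · exact ⟨hc, h1⟩
      · exact ⟨hc', by omega⟩
    have h := Finset.card_le_card this
    rwa [Finset.card_pair hne] at h
  obtain ⟨i2, hx2⟩ := hdown x3 2 hx3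
  set x2 := flp x3 i2
  obtain ⟨i1, hx1⟩ := hdown x2 1 hx2
  set x1 := flp x2 i1
  obtain ⟨i0, hx0⟩ := hdown x1 0 hx1
  set x0 := flp x1 i0
  have B00 : B 0 0 = 1 := by have := hone x0 (by omega); rwa [hx0] at this
  have B11 : B 1 1 = 1 := by have := hone x1 (by omega); rwa [hx1] at this
  have B22 : B 2 2 = 1 := by have := hone x2 (by omega); rwa [hx2] at this
  have B01 : B 0 1 = 0 := by have := hzero x0 1 (by omega) (by omega); rwa [hx0] at this
  have B12 : B 1 2 = 0 := by have := hzero x1 2 (by omega) (by omega); rwa [hx1] at this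
  have B13 : B 1 3 = 0 := by have := hzero x1 3 (by omega) (by omega); rwa [hx1] at this
  have B23 : B 2 3 = 0 := by have := hzero x2 3 (by omega) (by omega); rwa [hx2] at this
  have B10 := hB0 1 0 (by omega)
  have B20 := hB0 2 0 (by omega)
  have B21 := hB0 2 1 (by omega)
  have B31 := hB0 3 1 (by omega)
  have B32 := hB0 3 2 (by omega)
  have B42 := hB0 4 2 (by omega)
  have B43 := hB0 4 3 (by omega)
  have B53 := hB0 5 3 (by omega)
  have L2 : ∀ x, D x = 2 → pp D x 1 = 2 ∧ pp D x 3 = 14 ∧ 4 * B 2 4 + 14 = 14 * B 3 3 := by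
    intro x hx
    have e0 := E x 1 0 hx
    have e1 := E x 1 1 hx
    have e2 := E x 1 2 hx
    have e := E16 x 1 hx
    simp only [Nat.reduceAdd, Nat.reduceSub, zero_add, B22, B20, B11, B21, B31, B23, B12, B32, B13,
      mul_zero, mul_one, add_zero, zero_add] at e0 e1 e2 e
    have h3 : pp D x 3 = 14 := by omega
    rw [h3] at e2
    exact ⟨by omega, h3, by omega⟩
  have L3 : ∀ x, D x = 3 → pp D x 2 = 3 * B 3 3 ∧ pp D x 2 + pp D x 3 + pp D x 4 = 16 ∧
      4 * B 3 4 = pp D x 3 * B 3 3 ∧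
      5 * B 3 5 + 13 * B 3 3 = pp D x 2 * B 2 4 + pp D x 3 * B 3 4 + pp D x 4 * B 4 4 := by
    intro x hx
    have e0 := E x 2 1 hx
    have e1 := E x 2 2 hx
    have e2 := E x 2 3 hx
    have e := E16 x 2 hx
    simp only [Nat.reduceAdd, Nat.reduceSub, B22, B31, B32, B42, B23, B43,
      mul_zero, mul_one, add_zero, zero_add] at e0 e1 e2 e
    exact ⟨e0.symm, e, e1, e2⟩
  have L4 : ∀ x, D x = 4 → 4 * B 4 4 = pp D x 3 * B 3 3 ∧ pp D x 3 ≤ 16 := by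
    intro x hx
    have e0 := E x 3 2 hx
    have e := E16 x 3 hx
    simp only [Nat.reduceAdd, Nat.reduceSub, B42, B43, B53,
      mul_zero, add_zero] at e0 e
    exact ⟨e0, by omega⟩
  obtain ⟨_, _, hl2⟩ := L2 x2 hx2
  obtain ⟨l31, l32, l33, l34⟩ := L3 x3 hx3
  have hcases : B 3 3 = 3 ∨ B 3 3 = 5 := by omega
  rcases hcases with hb | hb
  · exfalso
    have hb24 : B 2 4 = 7 := by omega
    rw [hb] at l31 l33 l34
    rw [l31, hb24] at l34
    have hp3 : pp D x3 3 = 0 ∨ pp D x3 3 = 4 := by omega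
    obtain ⟨i4, hx4⟩ := pp_pos D x3 4 (by omega)
    obtain ⟨l41, l42⟩ := L4 _ hx4
    rw [hb] at l41
    set x4 := flp x3 i4
    have hb44 : B 4 4 = 3 := by
      rcases hp3 with h | h
      · have h4 : pp D x3 4 = 7 := by omega
        rw [h, h4] at l34
        omega
      · have h4 : pp D x3 4 = 3 := by omega
        have h34 : B 3 4 = 3 := by omega
        rw [h, h4, h34] at l34
        omega
    have hn4 : (C.filter (fun c => hammingDist x4 c = 4)).card = 3 := by
      have := hB x4 4
      rw [hx4, hb44] at this
      exact this
    obtain ⟨c, c', hc, hc', hne⟩ := (Finset.one_lt_card_iff).mp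
      (show 1 < (C.filter (fun c => hammingDist x4 c = 4)).card by omega)
    have hcc := (Finset.mem_filter.mp hc)
    have hcc' := (Finset.mem_filter.mp hc')
    have hsub : ∀ i, x4 i ≠ c i → x4 i ≠ c' i := by
      intro i hi
      have hy : D (flp x4 i) = 3 := by
        have a1 := hstep2 x4 i
        have a2 := hD2 (flp x4 i) c hcc.1
        have a3 := dist_flp_ne x4 c i hi
        omega
      have hn3 : (C.filter (fun c => hammingDist (flp x4 i) c = 3)).card = 3 := by
        have := hB (flp x4 i) 3
        rw [hy, hb] at this
        exact this
      have hss : C.filter (fun c => hammingDist (flp x4 i) c = 3)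
          ⊆ C.filter (fun c => hammingDist x4 c = 4) := by
        intro z hz
        rw [Finset.mem_filter] at hz ⊢
        refine ⟨hz.1, ?_⟩
        have a1 := hD2 x4 z hz.1
        by_cases hiz : x4 i = z i
        · have := dist_flp_eq x4 z i hiz
          omega
        · have := dist_flp_ne x4 z i hiz
          omega
      have heq := Finset.eq_of_subset_of_card_le hss (by omega)
      rw [← heq, Finset.mem_filter] at hc'
      intro hcon
      have := dist_flp_eq x4 c' i hcon
      omega
    have hfe : (Finset.univ.filter (fun i => x4 i ≠ c i)) = Finset.univ.filter (fun i => x4 i ≠ c' i) := by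
      apply Finset.eq_of_subset_of_card_le
      · intro i hi
        simp only [Finset.mem_filter, Finset.mem_univ, true_and] at hi ⊢
        exact hsub i hi
      · have a1 := hcc.2
        have a2 := hcc'.2
        unfold hammingDist at a1 a2
        rw [a1, a2]
    apply hne
    funext i
    have := Finset.ext_iff.mp hfe i
    simp only [Finset.mem_filter, Finset.mem_univ, true_and] at this
    by_cases hi : x4 i = c i
    · have h2 : x4 i = c' i := by tauto
      rw [← hi, h2]
    · rw [← z2 _ _ hi, ← z2 _ _ (this.mp hi)]
  · have L3' : ∀ x, D x = 3 → pp D x 2 = 15 ∧ pp D x 3 = 0 ∧ pp D x 4 = 1 := by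
      intro x hx
      obtain ⟨h1, h2, h3, -⟩ := L3 x hx
      rw [hb] at h1 h3
      omega
    have L4' : ∀ x, D x = 4 → ∀ q, D (flp x q) = 3 := by
      intro x hx q
      obtain ⟨i, hi⟩ := hdown x 3 hx
      by_cases hqi : q = i
      · rw [hqi]; exact hi
      obtain ⟨h2, h3, h4⟩ := L3' _ hi
      have hD4 : D (flp (flp x i) q) ≠ 4 := by
        intro hcon
        obtain ⟨a, ha⟩ := Finset.card_eq_one.mp h4
        have m1 : q ∈ ({a} : Finset (Fin 16)) := by rw [← ha]; simpa using hcon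
        have m2 : i ∈ ({a} : Finset (Fin 16)) := by rw [← ha]; simpa [flp_flp] using hx
        rw [Finset.mem_singleton] at m1 m2
        exact hqi (m1.trans m2.symm)
      have hD3 : D (flp (flp x i) q) ≠ 3 := by
        intro hcon
        have := Finset.card_eq_zero.mp h3
        have m1 : q ∈ (∅ : Finset (Fin 16)) := by rw [← this]; simpa using hcon
        simp at m1
      have hD2' : D (flp (flp x i) q) = 2 := by
        rcases htri _ 2 hi q with h | h | h
        · exact h
        · exact absurd h hD3
        · exact absurd h hD4
      rw [flp_comm] at hD2'
      have := hstep2 (flp x q) i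
      have := hstep2 x q
      omega
    have hno : ∀ n x, D x ≠ 5 + n := by
      intro n
      induction n with
      | zero =>
        intro x hx
        obtain ⟨i, hi⟩ := hdown x 4 hx
        have := L4' _ hi i
        rw [flp_flp] at this
        omega
      | succ n ih =>
        intro x hx
        obtain ⟨i, hi⟩ := hdown x (5 + n) (by omega)
        exact ih _ hi
    have hle : ∀ x, D x < 5 := by
      intro x
      by_contra h
      exact hno (D x - 5) x (by omega)
    have hall : ∀ x a b, (∀ q, D (flp x q) = b) → a = b → pp D x a = 16 := by
      intro x a b h hab
      subst hab
      simp [pp, h]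
    have d01 := double_count D 0 1 16 1
      (by
        intro x hx
        apply hall x 1 1 _ rfl
        intro q
        have a1 := hstep x q
        have a2 : D (flp x q) ≠ 0 := by
          intro hcon
          obtain ⟨c, hc, h⟩ := hD1 x
          obtain ⟨c', hc', h'⟩ := hD1 (flp x q)
          rw [hx, hammingDist_eq_zero] at h
          rw [hcon, hammingDist_eq_zero] at h'
          have a3 := dist_flp_eq x x q rfl
          rw [h', h, hammingDist_self] at a3
          have := huniq c c c' hc hc' (by rw [hammingDist_self, hammingDist_comm]; omega)
          rw [this, hammingDist_self] at a3
          omega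
        omega)
      (by
        intro x hx
        have e0 := E x 0 0 hx
        have e := E16 x 0 hx
        obtain ⟨i, hi⟩ := hdown x 0 hx
        obtain ⟨c, hc, h⟩ := hD1 x
        rw [pp, Finset.card_eq_one]
        refine ⟨i, ?_⟩
        ext j
        simp only [Finset.mem_filter, Finset.mem_univ, true_and, Finset.mem_singleton]
        constructor
        · intro hj
          obtain ⟨c1, hc1, h1⟩ := hD1 (flp x i)
          obtain ⟨c2, hc2, h2⟩ := hD1 (flp x j)
          rw [hi, hammingDist_eq_zero] at h1
          rw [hj, hammingDist_eq_zero] at h2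
          have t1 := dist_flp_eq x x i rfl
          have t2 := dist_flp_eq x x j rfl
          rw [hammingDist_self, hammingDist_comm] at t1 t2
          rw [h1] at t1
          rw [h2] at t2
          have := huniq x c1 c2 hc1 hc2 (by omega)
          exact (flp_inj x i j (by rw [h1, h2, this])).symm
        · rintro rfl
          exact hi)
    have d12 := double_count D 1 2 15 2
      (by
        intro x hx
        have e0 := E x 0 0 hx
        have e1 := E x 0 1 hx
        have e := E16 x 0 hx
        simp only [Nat.reduceAdd, Nat.reduceSub, zero_add, B12, B10, B01, B11, B21, B13, B22,
          mul_zero, mul_one, add_zero] at e0 e1 e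
        have B02 : B 0 2 = 0 := by have := hzero x0 2 (by omega) (by omega); rwa [hx0] at this
        rw [B02] at e1
        omega)
      (fun x hx => (L2 x hx).1)
    have d23 := double_count D 2 3 14 15 (fun x hx => (L2 x hx).2.1) (fun x hx => (L3' x hx).1)
    have d34 := double_count D 3 4 1 16 (fun x hx => (L3' x hx).2.2)
      (fun x hx => hall x 3 3 (L4' x hx) rfl)
    have htot : (Finset.univ : Finset VV).card
        = ∑ j ∈ Finset.range 5, (Finset.univ.filter (fun x => D x = j)).card :=
      Finset.card_eq_sum_card_fiberwise (by intro x _; simpa using hle x)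
    have hcard : (Finset.univ : Finset VV).card = 65536 := by
      rw [Finset.card_univ, Fintype.card_fun, Fintype.card_fin, ZMod.card]
      norm_num
    have hC0 : Finset.univ.filter (fun x => D x = 0) = C := by
      ext x
      simp only [Finset.mem_filter, Finset.mem_univ, true_and]
      constructor
      · intro h
        obtain ⟨c, hc, h'⟩ := hD1 x
        rw [h, hammingDist_eq_zero] at h'
        rwa [h']
      · intro h
        have := hD2 x x h
        rw [hammingDist_self] at this
        omega
    rw [hcard] at htot
    simp only [Finset.sum_range_succ, Finset.sum_range_zero, hC0] at htot
    rw [hC0] at d01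
    omega

/-- Every binary completely regular code of length 16 with minimum distance 6 has
exactly 256 codewords. -/
theorem stmt_4 (C : Set (Fin 16 → ZMod 2)) (hC : C.Nonempty)
    (hreg : IsCompletelyRegular C) (hd : IsMinDist C 6) :
    C.ncard = 256 := by
  classical
  obtain ⟨CC, rfl⟩ : ∃ CC : Finset VV, C = ↑CC := ⟨C.toFinite.toFinset, by simp⟩
  rw [Set.ncard_coe_finset]
  have hn : ∀ x k, {c ∈ (CC : Set VV) | hammingDist x c = k}.ncard = nn CC x k := by
    intro x k
    rw [nn, ← Set.ncard_coe_finset]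
    congr 1
    ext c
    simp
  have hD1 : ∀ x, ∃ c ∈ CC, hammingDist x c = distToCode (CC : Set VV) x := by
    intro x
    have hne : {d | ∃ c ∈ (CC : Set VV), hammingDist x c = d}.Nonempty := by
      obtain ⟨c, hc⟩ := hC
      exact ⟨_, c, hc, rfl⟩
    obtain ⟨c, hc, h⟩ := Nat.sInf_mem hne
    exact ⟨c, by simpa using hc, h⟩
  have hD2 : ∀ x, ∀ c ∈ CC, distToCode (CC : Set VV) x ≤ hammingDist x c := by
    intro x c hc
    exact Nat.sInf_le ⟨c, by simpa using hc, rfl⟩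
  refine main_aux CC (distToCode (CC : Set VV))
    (fun j k => if h : ∃ y, distToCode (CC : Set VV) y = j then nn CC h.choose k else 0)
    hD1 hD2 ?_ ?_ ?_ ?_
  · intro x k
    have h : ∃ y, distToCode (CC : Set VV) y = distToCode (CC : Set VV) x := ⟨x, rfl⟩
    simp only [dif_pos h]
    have := hreg _ _ h.choose_spec k
    rw [hn, hn] at this
    exact this.symm
  · intro j k hjk
    by_cases h : ∃ y, distToCode (CC : Set VV) y = j
    · simp only [dif_pos h]
      rw [nn, Finset.card_eq_zero, Finset.filter_eq_empty_iff]
      intro c hc hcon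
      have := hD2 h.choose c hc
      rw [h.choose_spec] at this
      omega
    · simp only [dif_neg h]
  · intro x hx y hy
    exact hd.1 x (by simpa using hx) y (by simpa using hy)
  · obtain ⟨x, hx, y, hy, h⟩ := hd.2
    exact ⟨x, by simpa using hx, y, by simpa using hy, h⟩
end
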